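/- arXiv:1012.0628 — 2 statements merged into one kernel-verified Lean document; each statement's English description precedes it below -/
import Mathlib

section
/- With notation as in the proof of the high-degree lemma: X ⊆ A^n is smooth of dimension m over F_q contained in a neighborhood N_x with global derivations D_1,...,D_n and local parameters as constructed there, for f := f_0 + g_1^p t_1 + ... + g_m^p t_m + h^p chosen with f_0 ∈ I_d', g_i ∈ S'_γ, h ∈ I'_η uniform and independent, and W_i := X ∩ {D_1 f = ... = D_i f = 0}: for each 0 ≤ i ≤ m-1, conditioned on a choice of f_0, g_1, ..., g_i for which dim W_i ≤ m - i, the probability that dim W_{i+1} ≤ m - i - 1 is 1 - o(1) as d → ∞. -/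
/-!
Fix `f_0, g_1, …, g_i`, so that `W_i = U ∩ V(I)` is fixed, where the generators of `I` have degree
`O(d)` and there are at most `n` of them. In characteristic `p` one has
`D_{i+1} f = D_{i+1} f_0 + g_{i+1} ^ p * s`, so `W_{i+1}` is the section of `W_i` by one random
hypersurface.

* If `dim W_i ≤ m - i` and `dim W_{i+1} > m - i - 1`, then `W_{i+1}` contains the generic point `Q`
  of some component of `W_i`, and this component has positive dimension
  (`exists_minimalPrime_of_not_drop`).
* For such a prime `Q` the bad `g_{i+1}` all lie in one coset of `Q`, because `g ↦ g ^ p` is additive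
  and `s ∉ Q`. As some coordinate is transcendental modulo `Q`, polynomials of degree at most `γ`
  fill at least `q ^ (γ + 1)` classes modulo `Q`, so the proportion of bad choices is at most
  `2 ^ -(γ + 1)` (`card_coset_le`).
* The number of components of `W_i` is polynomial in `d` (`ncard_minimalPrimes_le`), while `γ` grows
  linearly in `d`, so the total proportion of bad choices tends to zero (`exists_threshold`). The
  resulting bound does not depend on `i`, `f_0` and the `g_j`.

The bound on the number of components is a weak form of Bézout's theorem, proved with affine Hilbert
functions and dimensions measured by transcendence degree. A prime of transcendence degree `k` has
Hilbert function at least a constant multiple of `D ^ k`, the constant depending on `n` only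
(`TD.le_HF`). Imposing one more equation lowers the transcendence degree of a component by at most
one (`TD.of_mem_minimalPrimes`) and increases the sum of the leading constants at most by the factor
`(n + 1) * d` (`LB.step`). Comparing, after all equations, with the Hilbert function of the whole
affine space bounds the number of components.
-/

/-! Affine-chart setup for the proofs of the high-degree lemmas in Poonen,
"Smooth hypersurface sections containing a given subscheme over a finite field". -/

noncomputable section

open MvPolynomial Filter Topology

namespace ProjBertiniAff

variable (K : Type) [Field K] [Fintype K] (n : ℕ)

/-- The affine coordinate ring `A = K[x_1, …, x_n]` of affine `n`-space. -/
abbrev Aff : Type := MvPolynomial (Fin n) K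

/-- `S'_d`: polynomials of total degree at most `d`. -/
def Sd' (d : ℕ) : Set (Aff K n) := {f | f.totalDegree ≤ d}

/-- `I'_d`: polynomials of total degree at most `d` lying in the ideal `J` of the
(dehomogenized) closed subscheme `Z`. -/
def Idd' (J : Ideal (Aff K n)) (d : ℕ) : Set (Aff K n) :=
  {f | f.totalDegree ≤ d ∧ f ∈ J}

/-- The local ring at `p` of the closed subscheme of `𝔸^n` cut out by `J`. -/
abbrev affLocalRing (J : Ideal (Aff K n)) (p : PrimeSpectrum (Aff K n)) : Type :=
  Localization.AtPrime p.asIdeal ⧸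
    Ideal.map (algebraMap (Aff K n) (Localization.AtPrime p.asIdeal)) J

/-- The degree `[κ(P) : K]` of a closed point `P` of `𝔸^n`. -/
def degPtAff (p : PrimeSpectrum (Aff K n)) : ℕ :=
  Module.finrank K (Aff K n ⧸ p.asIdeal)

/-- `R` is a regular local ring of dimension `d`. -/
def IsRegularLocalOfDim (R : Type) [CommRing R] (d : ℕ) : Prop :=
  IsNoetherianRing R ∧ ringKrullDim R = d ∧
    ∃ I : Ideal R, I.IsMaximal ∧ (∀ J : Ideal R, J.IsMaximal → J = I) ∧
      ∃ s : Finset R, s.card = d ∧ Ideal.span (s : Set R) = I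

variable {n}

/-- The ideal `(t_{m+1}, …, t_n)` cutting out `X` locally, from the system of local
parameters `t`. -/
def paramIdeal (m : ℕ) (t : Fin n → Aff K n) : Ideal (Aff K n) :=
  Ideal.span (t '' {j : Fin n | m ≤ (j : ℕ)})

/-- The set of points of `X = N_x ∩ {t_{m+1} = ⋯ = t_n = 0}`. -/
def Xpts (m : ℕ) (t : Fin n → Aff K n) (U : Set (PrimeSpectrum (Aff K n))) :
    Set (PrimeSpectrum (Aff K n)) :=
  {p | p ∈ U ∧ paramIdeal K m t ≤ p.asIdeal}

/-- The random polynomial `f := f_0 + g_1^p t_1 + ⋯ + g_m^p t_m + h^p` of the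
closed-point sieve. -/
def fpoly (pp m : ℕ) (t : Fin n → Aff K n) (f0 : Aff K n) (g : Fin n → Aff K n)
    (h : Aff K n) : Aff K n :=
  f0 + (∑ j : Fin n, if (j : ℕ) < m then (g j) ^ pp * t j else 0) + h ^ pp

/-- `W_i := X ∩ {D_1 f = ⋯ = D_i f = 0}`.  (In characteristic `p` the derivatives
`D_j f` do not depend on `h`, so we take `h = 0` in `f`.) -/
def Wset (pp m : ℕ) (t : Fin n → Aff K n)
    (U : Set (PrimeSpectrum (Aff K n)))
    (D : Fin n → Derivation K (Aff K n) (Aff K n))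
    (f0 : Aff K n) (g : Fin n → Aff K n) (i : ℕ) : Set (PrimeSpectrum (Aff K n)) :=
  {p | p ∈ Xpts K m t U ∧ ∀ j : Fin n, (j : ℕ) < i →
    D j (fpoly K pp m t f0 g 0) ∈ p.asIdeal}


variable (n) in
/-- `τ := max_i deg t_i`. -/
def tauDeg (t : Fin n → Aff K n) : ℕ := Finset.univ.sup fun j => (t j).totalDegree

section Helpers

/-! ### Transcendence degree of a hypersurface section -/

variable {F : Type} [Field F]

/-- `TD F B k`: the transcendence degree of the `F`-algebra `B` is at least `k`. -/
def TD (F : Type) [Field F] (B : Type) [CommRing B] [Algebra F B] (k : ℕ) : Prop :=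
  ∃ y : Fin k → B, AlgebraicIndependent F y

/-- A nonzero multiple of a nonconstant polynomial `q` involves every variable that `q` does, so
the remaining variables stay algebraically independent modulo any ideal whose trace on the
polynomial ring is `(q)`. -/
lemma eq_zero_of_dvd_rename {s : ℕ} {q : MvPolynomial (Fin (s + 1)) F} {j : Fin (s + 1)}
    (hj : q.degreeOf j ≠ 0) (u : MvPolynomial (Fin s) F)
    (h : q ∣ rename j.succAbove u) : u = 0 := by
  by_contra hu
  obtain ⟨v, hv⟩ := h
  have hne : rename j.succAbove u ≠ 0 := by
    rwa [Ne, map_eq_zero_iff _ (rename_injective _ (Fin.succAbove_right_injective))]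
  have hq : q ≠ 0 := by rintro rfl; simp at hv; exact hne (by simp [hv])
  have hv0 : v ≠ 0 := by rintro rfl; simp at hv; exact hne (by simp [hv])
  have h1 : (rename j.succAbove u).degreeOf j = 0 := by
    by_contra h0
    have : j ∈ (rename j.succAbove u).vars := by
      rw [degreeOf_eq_sup] at h0
      by_contra hj
      apply h0
      refine Nat.eq_zero_of_le_zero (Finset.sup_le fun m hm => ?_)
      by_contra hmj
      exact hj ((mem_vars_iff_mem_support j).2 ⟨m, hm, by simpa using hmj⟩)
    have := vars_rename _ _ this
    simp [Fin.succAbove_ne] at this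
  rw [hv, degreeOf_mul_eq hq hv0] at h1
  omega

/-- Passing to a minimal prime over a nonzero element of an affine domain lowers the transcendence
degree by at most one. After Noether normalization, going down and Krull's principal ideal theorem
force the trace of `Q` on the polynomial ring to be zero or generated by one prime element. -/
lemma TD.quot_minimalPrime {B : Type} [CommRing B] [IsDomain B] [Algebra F B]
    [Algebra.FiniteType F B] {f : B} {Q : Ideal B}
    (hQ : Q ∈ (Ideal.span {f}).minimalPrimes) {k : ℕ} (h : TD F B (k + 1)) : TD F (B ⧸ Q) k := by
  obtain ⟨s, g, hg, hfin⟩ := exists_finite_inj_algHom_of_fg F B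
  have hQp : Q.IsPrime := hQ.isPrime
  have hN : IsNoetherianRing B := Algebra.FiniteType.isNoetherianRing F B
  let R := MvPolynomial (Fin s) F
  algebraize [g.toRingHom]
  have hinj : Function.Injective (algebraMap R B) := hg
  have hfi : Module.Finite R B := hfin
  have hint : Algebra.IsIntegral R B := inferInstance
  have hfaith : FaithfulSMul R B := (faithfulSMul_iff_algebraMap_injective R B).2 hinj
  have hst : IsScalarTower F R B := IsScalarTower.of_algebraMap_eq' g.comp_algebraMap.symm
  have htr : Algebra.trdeg F B = s := by
    have := trdeg_add_eq F R (A := B)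
    rw [← this, trdeg_eq_zero (R := R) (A := B)]
    simp [R]
  have hks : k + 1 ≤ s := by
    obtain ⟨y, hy⟩ := h
    have := hy.cardinalMk_le_trdeg
    rw [htr] at this
    simpa using this
  obtain ⟨s, rfl⟩ : ∃ s', s = s' + 1 := ⟨s - 1, by omega⟩
  -- the trace of `Q` on the polynomial ring is contained in a principal ideal `(π)` with `π`
  -- involving some variable
  have key : ∃ π : R, ∃ j, π.degreeOf j ≠ 0 ∧ ∀ x : R, algebraMap R B x ∈ Q → π ∣ x := by
    by_cases hq : Q.under R = ⊥
    · refine ⟨X 0, 0, by simp, fun x hx => ?_⟩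
      have : x ∈ Q.under R := hx
      rw [hq] at this
      simp [(Submodule.mem_bot R).1 this]
    · obtain ⟨π, hπ, hπp⟩ := Ideal.IsPrime.exists_mem_prime_of_ne_bot
        (inferInstance : (Q.under R).IsPrime) hq
      have hspan : (Ideal.span {π}).IsPrime := (Ideal.span_singleton_prime hπp.ne_zero).2 hπp
      have hle : Ideal.span {π} ≤ Q.under R := by simpa [Ideal.span_le] using hπ
      have heq : Ideal.span {π} = Q.under R := by
        by_contra hne
        have hlt := lt_of_le_of_ne hle hne
        obtain ⟨P, hPQ, hPp, hPo⟩ := Ideal.exists_ideal_lt_liesOver_of_lt Q hlt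
        have hP0 : (⊥ : Ideal B) < P := by
          rw [bot_lt_iff_ne_bot]
          rintro rfl
          have h1 := hPo.over
          have : π ∈ Ideal.under R (⊥ : Ideal B) := h1 ▸ Ideal.mem_span_singleton_self π
          rw [Ideal.under, Ideal.mem_comap, Ideal.mem_bot, map_eq_zero_iff _ hinj] at this
          exact hπp.ne_zero this
        have hb : (⊥ : Ideal B).IsPrime := Ideal.isPrime_bot
        have h1 := Ideal.height_strict_mono_of_isPrime_of_isPrime hP0
        have h2 := Ideal.height_strict_mono_of_isPrime_of_isPrime hPQ
        have h3 := Ideal.height_le_one_of_isPrincipal_of_mem_minimalPrimes _ Q hQ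
        have h4 := Order.one_le_iff_pos.2 (lt_of_le_of_lt (bot_le) h1)
        exact absurd (lt_of_le_of_lt h4 h2) (not_lt.2 h3)
      suffices hj : ∃ j, π.degreeOf j ≠ 0 by
        obtain ⟨j, hj⟩ := hj
        refine ⟨π, j, hj, fun x hx => ?_⟩
        have : x ∈ Q.under R := hx
        rw [← heq] at this
        exact Ideal.mem_span_singleton.1 this
      by_contra! hdeg
      obtain ⟨c, hc⟩ : ∃ c : F, π = C c := by
        refine ⟨coeff 0 π, ?_⟩
        apply totalDegree_eq_zero_iff_eq_C.1
        rw [totalDegree_eq_zero_iff]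
        intro m hm x
        have := degreeOf_le_iff.1 (hdeg x).le m hm
        omega
      apply hπp.not_isUnit
      rw [hc]
      refine (IsUnit.mk0 c ?_).map C
      rintro rfl
      exact hπp.ne_zero (by simpa using hc)
  obtain ⟨π, j, hj, hdvd⟩ := key
  refine ⟨fun i => Ideal.Quotient.mk Q (g (X (j.succAbove (i.castLE (by omega))))), ?_⟩
  suffices AlgebraicIndependent F (fun i : Fin s => Ideal.Quotient.mk Q (g (X (j.succAbove i)))) from
    this.comp (Fin.castLE (by omega)) (Fin.castLE_injective _)
  rw [algebraicIndependent_iff]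
  intro u hu
  apply eq_zero_of_dvd_rename hj
  apply hdvd
  rw [← Ideal.Quotient.eq_zero_iff_mem, ← hu]
  change (Ideal.Quotient.mkₐ F Q) (g _) = _
  have : ((Ideal.Quotient.mkₐ F Q).comp (g.comp (rename j.succAbove))) =
    aeval (fun i : Fin s => Ideal.Quotient.mk Q (g (X (j.succAbove i)))) := by
    ext i; simp
  exact DFunLike.congr_fun this u

lemma TD.of_mem_minimalPrimes {n : ℕ} {P Q : Ideal (MvPolynomial (Fin n) F)} [P.IsPrime]
    {f : MvPolynomial (Fin n) F} (hQ : Q ∈ (P ⊔ Ideal.span {f}).minimalPrimes) {k : ℕ}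
    (h : TD F (MvPolynomial (Fin n) F ⧸ P) (k + 1)) : TD F (MvPolynomial (Fin n) F ⧸ Q) k := by
  have hPQ : P ≤ Q := le_sup_left.trans hQ.1.2
  have hmap : (P ⊔ Ideal.span {f}).map (Ideal.Quotient.mk P) =
      Ideal.span {Ideal.Quotient.mk P f} := by
    rw [Ideal.map_sup, Ideal.map_quotient_self, bot_sup_eq, Ideal.map_span, Set.image_singleton]
  have hmin : Q.map (Ideal.Quotient.mk P) ∈
      (Ideal.span {Ideal.Quotient.mk P f}).minimalPrimes := by
    have hcm := Ideal.comap_map_of_surjective' (Ideal.Quotient.mk P) Ideal.Quotient.mk_surjective Q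
    rw [Ideal.mk_ker, sup_eq_left.2 hPQ] at hcm
    have hQp : Q.IsPrime := hQ.1.1
    refine ⟨⟨Ideal.map_isPrime_of_surjective Ideal.Quotient.mk_surjective
      (by rwa [Ideal.mk_ker]), ?_⟩, ?_⟩
    · rw [← hmap]
      exact Ideal.map_mono hQ.1.2
    · rintro I ⟨hIp, hI⟩ hle
      have := hQ.2 (y := I.comap (Ideal.Quotient.mk P)) ⟨Ideal.comap_isPrime _ _, ?_⟩ ?_
      · exact Ideal.map_le_iff_le_comap.2 this
      · rw [← hmap] at hI
        exact Ideal.map_le_iff_le_comap.1 hI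
      · exact (Ideal.comap_mono hle).trans hcm.le
  obtain ⟨y, hy⟩ := TD.quot_minimalPrime hmin h
  let e := DoubleQuot.quotQuotEquivQuotOfLEₐ F hPQ
  exact ⟨e ∘ y, hy.map' (f := e.toAlgHom) e.injective⟩

/-! ### Hilbert functions -/

/-- The affine Hilbert function of `F[x_1, …, x_n] / I`: the dimension of the image of the
polynomials of total degree at most `D`. -/
def HF {n : ℕ} (I : Ideal (MvPolynomial (Fin n) F)) (D : ℕ) : ℕ :=
  Module.finrank F ((restrictTotalDegree (Fin n) F D).map (Ideal.Quotient.mkₐ F I).toLinearMap)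

variable {n : ℕ}

lemma HF_mono (I : Ideal (MvPolynomial (Fin n) F)) {D D' : ℕ} (h : D ≤ D') : HF I D ≤ HF I D' := by
  apply Submodule.finrank_mono
  apply Submodule.map_mono
  intro p hp
  rw [mem_restrictTotalDegree] at hp ⊢
  omega

lemma quotient_mul_left_cancel {P : Ideal (MvPolynomial (Fin n) F)} [P.IsPrime]
    {f : MvPolynomial (Fin n) F} (hf : f ∉ P) {a b : MvPolynomial (Fin n) F ⧸ P}
    (h : Ideal.Quotient.mk P f * a = Ideal.Quotient.mk P f * b) : a = b :=
  mul_left_cancel₀ (by rwa [Ne, Ideal.Quotient.eq_zero_iff_mem]) h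

/-- Multiplication by `f` is injective on the domain `F[x]/P`, so killing `f` lowers the Hilbert
function by at least a shifted copy of itself. -/
lemma HF_add_le {P J : Ideal (MvPolynomial (Fin n) F)} [P.IsPrime] (hPJ : P ≤ J)
    {f : MvPolynomial (Fin n) F} (hfP : f ∉ P) (hfJ : f ∈ J) {d : ℕ} (hd : f.totalDegree ≤ d)
    (D : ℕ) : HF J (D + d) + HF P D ≤ HF P (D + d) := by
  let V := (restrictTotalDegree (Fin n) F (D + d)).map (Ideal.Quotient.mkₐ F P).toLinearMap
  let W := (restrictTotalDegree (Fin n) F D).map (Ideal.Quotient.mkₐ F P).toLinearMap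
  let φ := (Ideal.Quotient.factorₐ F hPJ).toLinearMap
  have hrange : Module.finrank F (LinearMap.range (φ.domRestrict V)) = HF J (D + d) := by
    rw [LinearMap.range_domRestrict, ← Submodule.map_comp]
    rfl
  have hmul : ∀ w ∈ W, Ideal.Quotient.mk P f * w ∈ V := by
    rintro _ ⟨p, hp, rfl⟩
    refine ⟨f * p, ?_, by simp⟩
    simp only [SetLike.mem_coe, mem_restrictTotalDegree] at hp ⊢
    exact (totalDegree_mul _ _).trans (by omega)
  have hker : ∀ w, φ (Ideal.Quotient.mk P f * w) = 0 := by
    intro w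
    obtain ⟨w, rfl⟩ := Ideal.Quotient.mk_surjective w
    rw [← map_mul]
    exact Ideal.Quotient.eq_zero_iff_mem.2 (J.mul_mem_right _ hfJ)
  let ψ : W →ₗ[F] LinearMap.ker (φ.domRestrict V) :=
    LinearMap.codRestrict _ (LinearMap.codRestrict V
      ((LinearMap.mulLeft F (Ideal.Quotient.mk P f)).comp W.subtype) fun w => hmul w w.2)
      (fun w => hker w)
  have hψ : Function.Injective ψ := by
    intro a b hab
    have h1 : Ideal.Quotient.mk P f * a = Ideal.Quotient.mk P f * b :=
      congrArg (fun x : LinearMap.ker (φ.domRestrict V) => (x.1 : MvPolynomial (Fin n) F ⧸ P)) hab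
    exact Subtype.ext (quotient_mul_left_cancel hfP h1)
  have h1 := LinearMap.finrank_range_add_finrank_ker (φ.domRestrict V)
  have h2 := LinearMap.finrank_le_finrank_of_injective hψ
  rw [hrange] at h1
  change _ + Module.finrank F W ≤ Module.finrank F V
  omega

/-- For finitely many incomparable primes over `J`, the Hilbert function of `J` dominates the sum of
those of the primes up to a shift: choosing `a_Q` outside `Q` and in all the other primes, the
elements `a_Q b_Q` realise the direct sum inside the image of `F[x]/J`. -/
lemma sum_HF_le (S : Finset (Ideal (MvPolynomial (Fin n) F))) (hp : ∀ Q ∈ S, Q.IsPrime)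
    (hinc : ∀ Q ∈ S, ∀ Q' ∈ S, Q' ≤ Q → Q' = Q) {J : Ideal (MvPolynomial (Fin n) F)}
    (hJ : ∀ Q ∈ S, J ≤ Q) : ∃ e, ∀ D, ∑ Q ∈ S, HF Q D ≤ HF J (D + e) := by
  classical
  have hex : ∀ Q : S, ∃ a : MvPolynomial (Fin n) F, a ∉ Q.1 ∧ ∀ Q' ∈ S, Q' ≠ Q.1 → a ∈ Q' := by
    intro Q
    by_contra! hcon
    have hQ := hp Q.1 Q.2
    have hle : (S.erase Q.1).inf id ≤ Q.1 := by
      intro a ha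
      by_contra haQ
      obtain ⟨Q', hQ', hne, haQ'⟩ := hcon a haQ
      exact haQ' ((Finset.inf_le (f := id) (Finset.mem_erase.2 ⟨hne, hQ'⟩)) ha)
    obtain ⟨Q', hQ', hle'⟩ := (Ideal.IsPrime.inf_le' hQ).1 hle
    rw [Finset.mem_erase] at hQ'
    exact hQ'.1 (hinc _ Q.2 _ hQ'.2 hle')
  choose a ha ha' using hex
  let e := Finset.univ.sup fun Q : S => (a Q).totalDegree
  refine ⟨e, fun D => ?_⟩
  let W (Q : S) := (restrictTotalDegree (Fin n) F D).map (Ideal.Quotient.mkₐ F Q.1).toLinearMap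
  let φ : (MvPolynomial (Fin n) F ⧸ J) →ₗ[F] ((Q : S) → MvPolynomial (Fin n) F ⧸ Q.1) :=
    LinearMap.pi fun Q => (Ideal.Quotient.factorₐ F (hJ Q.1 Q.2)).toLinearMap
  let V := (restrictTotalDegree (Fin n) F (D + e)).map (Ideal.Quotient.mkₐ F J).toLinearMap
  let Ψ : ((Q : S) → W Q) →ₗ[F] ((Q : S) → MvPolynomial (Fin n) F ⧸ Q.1) :=
    LinearMap.pi fun Q => ((LinearMap.mulLeft F (Ideal.Quotient.mk Q.1 (a Q))).comp
      (W Q).subtype).comp (LinearMap.proj Q)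
  have hΨ : Function.Injective Ψ := by
    intro x y hxy
    ext Q
    have hQ := hp Q.1 Q.2
    have h1 : Ideal.Quotient.mk Q.1 (a Q) * (x Q) = Ideal.Quotient.mk Q.1 (a Q) * (y Q) :=
      congrFun hxy Q
    exact quotient_mul_left_cancel (ha Q) h1
  have hmem : ∀ w, Ψ w ∈ V.map φ := by
    intro w
    choose b hb hbw using fun Q => (w Q).2
    refine ⟨Ideal.Quotient.mk J (∑ Q, a Q * b Q), ⟨∑ Q, a Q * b Q, ?_, rfl⟩, ?_⟩
    · refine Submodule.sum_mem _ fun Q _ => ?_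
      have h1 := hb Q
      have h2 : (a Q).totalDegree ≤ e :=
        Finset.le_sup (f := fun Q : S => (a Q).totalDegree) (Finset.mem_univ Q)
      simp only [SetLike.mem_coe, mem_restrictTotalDegree] at h1 ⊢
      exact (totalDegree_mul _ _).trans (by omega)
    · ext Q
      change Ideal.Quotient.mk Q.1 (∑ Q, a Q * b Q) = Ideal.Quotient.mk Q.1 (a Q) * (w Q)
      rw [← hbw Q, map_sum, Finset.sum_eq_single Q]
      · simp
      · intro Q' _ hne
        rw [Ideal.Quotient.eq_zero_iff_mem]
        exact Ideal.mul_mem_right _ _ (ha' Q' Q.1 Q.2 fun h => hne (Subtype.ext h.symm))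
      · exact fun h => absurd (Finset.mem_univ Q) h
  have h1 : Module.finrank F ((Q : S) → W Q) ≤ Module.finrank F (V.map φ) :=
    LinearMap.finrank_le_finrank_of_injective (f := LinearMap.codRestrict (V.map φ) Ψ hmem)
      (fun x y h => hΨ (congrArg Subtype.val h))
  have hfree : ∀ Q, Module.Free F (W Q) := fun Q => Module.Free.of_divisionRing F (W Q)
  rw [Module.finrank_pi_fintype] at h1
  rw [← Finset.sum_coe_sort]
  exact h1.trans (Submodule.finrank_map_le φ V)

/-- Coordinate functions contain a transcendence basis, so transcendence degree `k` gives `k`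
algebraically independent coordinates and a lower bound of order `D ^ k` for the Hilbert function
whose constant does not depend on the prime. -/
lemma TD.le_HF {P : Ideal (MvPolynomial (Fin n) F)} [P.IsPrime] {k : ℕ}
    (h : TD F (MvPolynomial (Fin n) F ⧸ P) k) (D : ℕ) : (D / k + 1) ^ k ≤ HF P D := by
  let B := MvPolynomial (Fin n) F ⧸ P
  let x : Fin n → B := fun i => Ideal.Quotient.mk P (X i)
  have htop : Algebra.adjoin F (Set.range x) = ⊤ := by
    have := congrArg (Subalgebra.map (Ideal.Quotient.mkₐ F P))
      (adjoin_range_X (R := F) (σ := Fin n))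
    rw [AlgHom.map_adjoin, ← Set.range_comp, Algebra.map_top,
      AlgHom.range_eq_top _ |>.2 (Ideal.Quotient.mkₐ_surjective F P)] at this
    exact this
  have halg : Algebra.IsAlgebraic (Algebra.adjoin F (Set.range x)) B := by
    constructor
    intro b
    exact isAlgebraic_algebraMap (⟨b, by rw [htop]; trivial⟩ : Algebra.adjoin F (Set.range x))
  obtain ⟨T, hT, hTb⟩ := exists_isTranscendenceBasis_subset (R := F) (Set.range x)
  obtain ⟨y, hy⟩ := h
  have hcard := hy.cardinalMk_le_trdeg
  rw [← hTb.cardinalMk_eq_trdeg, Cardinal.le_def] at hcard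
  obtain ⟨ι⟩ := hcard
  have hz := hTb.1.comp _ ι.injective
  choose c hc using fun i => hT (ι i).2
  have hli : LinearIndependent F fun a : Fin k → Fin (D / k + 1) =>
      ∏ i, ((ι i : T) : B) ^ (a i : ℕ) := by
    have h1 := (basisMonomials (Fin k) F).linearIndependent.map'
      (aeval (R := F) fun i => ((ι i : T) : B)).toLinearMap (LinearMap.ker_eq_bot.2 hz)
    have h2 := h1.comp (fun a : Fin k → Fin (D / k + 1) =>
      Finsupp.equivFunOnFinite.symm fun i => (a i : ℕ)) (by
        intro a b hab
        ext i
        exact DFunLike.congr_fun hab i)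
    have h4 : (fun a : Fin k → Fin (D / k + 1) => ∏ i, ((ι i : T) : B) ^ (a i : ℕ)) =
        ((aeval (R := F) fun i => ((ι i : T) : B)).toLinearMap ∘ basisMonomials (Fin k) F) ∘
          fun a => Finsupp.equivFunOnFinite.symm fun i => (a i : ℕ) := by
      ext a
      simp [aeval_monomial, Finsupp.prod_fintype]
    rw [h4]
    exact h2
  have hmem : ∀ a : Fin k → Fin (D / k + 1), ∏ i, ((ι i : T) : B) ^ (a i : ℕ) ∈
      (restrictTotalDegree (Fin n) F D).map (Ideal.Quotient.mkₐ F P).toLinearMap := by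
    intro a
    refine ⟨∏ i, X (c i) ^ (a i : ℕ), ?_, ?_⟩
    · simp only [SetLike.mem_coe, mem_restrictTotalDegree]
      refine (totalDegree_finsetProd _ _).trans ?_
      calc ∑ i, (X (c i) ^ (a i : ℕ) : MvPolynomial (Fin n) F).totalDegree
          ≤ ∑ i : Fin k, D / k := Finset.sum_le_sum fun i _ => by
            rw [totalDegree_X_pow]; exact Nat.lt_succ_iff.1 (a i).2
        _ ≤ D := by simpa using Nat.mul_div_le D k
    · simp [← hc, x]
  have h3 : LinearIndependent F fun a : Fin k → Fin (D / k + 1) =>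
      (⟨_, hmem a⟩ : (restrictTotalDegree (Fin n) F D).map
        (Ideal.Quotient.mkₐ F P).toLinearMap) :=
    LinearIndependent.of_comp (Submodule.subtype _) hli
  simpa [HF] using h3.fintype_card_le_finrank

lemma HF_bot_le (D : ℕ) : HF (⊥ : Ideal (MvPolynomial (Fin n) F)) D ≤ (D + 1) ^ n := by
  refine (Submodule.finrank_map_le _ _).trans ?_
  let ι : {m : Fin n →₀ ℕ | m.degree ≤ D} → (Fin n → Fin (D + 1)) := fun m i =>
    ⟨m.1 i, Nat.lt_succ_iff.2 ((Finsupp.le_degree i m.1).trans m.2)⟩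
  have hι : Function.Injective ι := by
    intro a b hab
    ext i
    exact congrArg Fin.val (congrFun hab i)
  rw [restrictTotalDegree, Module.finrank_eq_nat_card_basis (basisRestrictSupport F _)]
  have h := Nat.card_le_card_of_injective ι hι
  rw [Nat.card_eq_fintype_card (α := Fin n → Fin (D + 1)), Fintype.card_fun, Fintype.card_fin,
    Fintype.card_fin] at h
  exact h

/-! ### Counting irreducible components -/

/-- `LB I k c`: up to a shift of the argument, the Hilbert function of `I` is at least `c * D ^ k`.
The largest such `c` plays the role of the degree of the `k`-dimensional variety of `I`. -/
def LB (I : Ideal (MvPolynomial (Fin n) F)) (k : ℕ) (c : ℝ) : Prop :=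
  ∃ s, ∀ D : ℕ, c * (D : ℝ) ^ k ≤ HF I (D + s)

lemma LB.mono {I : Ideal (MvPolynomial (Fin n) F)} {k : ℕ} {c c' : ℝ} (h : LB I k c)
    (hc : c' ≤ c) : LB I k c' := by
  obtain ⟨s, hs⟩ := h
  exact ⟨s, fun D => (mul_le_mul_of_nonneg_right hc (by positivity)).trans (hs D)⟩

lemma TD.lb {P : Ideal (MvPolynomial (Fin n) F)} [P.IsPrime] {k : ℕ}
    (h : TD F (MvPolynomial (Fin n) F ⧸ P) k) (hk : k ≤ n) :
    LB P k (1 / ((n : ℝ) + 1) ^ n) := by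
  refine ⟨0, fun D => ?_⟩
  have h1 : (D / k + 1) ^ k ≤ HF P D := h.le_HF D
  have h2 : D ^ k ≤ (n + 1) ^ n * (D / k + 1) ^ k := by
    rcases Nat.eq_zero_or_pos k with rfl | hk0
    · simpa using Nat.one_le_pow _ _ (by omega)
    · have h3 : D ≤ k * (D / k + 1) := by
        have := Nat.div_add_mod D k
        have := Nat.mod_lt D hk0
        rw [mul_add, mul_one]; omega
      calc D ^ k ≤ (k * (D / k + 1)) ^ k := Nat.pow_le_pow_left h3 k
        _ = k ^ k * (D / k + 1) ^ k := mul_pow _ _ _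
        _ ≤ (n + 1) ^ n * (D / k + 1) ^ k := Nat.mul_le_mul_right _
          ((Nat.pow_le_pow_left (by omega) k).trans (Nat.pow_le_pow_right (by omega) hk))
  have h4 : D ^ k ≤ (n + 1) ^ n * HF P D := h2.trans (Nat.mul_le_mul_left _ h1)
  rw [add_zero, div_mul_eq_mul_div, one_mul, div_le_iff₀' (by positivity)]
  exact_mod_cast h4

lemma sub_pow_ge {x y : ℝ} (hy : 0 ≤ y) (hyx : y ≤ x) (k : ℕ) :
    x ^ (k + 1) ≤ (x - y) ^ (k + 1) + (k + 1) * y * x ^ k := by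
  induction k with
  | zero => simp
  | succ k ih =>
    have hx : 0 ≤ x := hy.trans hyx
    have h1 := mul_le_mul_of_nonneg_left ih hx
    have h2 : y * (x - y) ^ (k + 1) ≤ y * x ^ (k + 1) := by
      refine mul_le_mul_of_nonneg_left (pow_le_pow_left₀ (by linarith) (by linarith) _) hy
    push_cast
    have e1 : x * x ^ (k + 1) = x ^ (k + 1 + 1) := by ring
    have e2 : x * ((x - y) ^ (k + 1) + (k + 1) * y * x ^ k) =
      (x - y) ^ (k + 1 + 1) + y * (x - y) ^ (k + 1) + (k + 1) * y * x ^ (k + 1) := by ring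
    rw [e1, e2] at h1
    linarith

/-- A function whose differences with step `d` are at least `c * D ^ k` is at least of the order of
`c * D ^ (k + 1) / ((k + 1) * d)`. -/
lemma sum_differences {H : ℕ → ℕ} {s d k : ℕ} (hd : 1 ≤ d) {c : ℝ} (hc : 0 ≤ c)
    (h : ∀ D : ℕ, (H (D + s) : ℝ) + c * (D : ℝ) ^ k ≤ H (D + s + d)) (D : ℕ) :
    c / ((k + 1) * d) * (D : ℝ) ^ (k + 1) ≤ H (D + s + d) := by
  have hd' : (1 : ℝ) ≤ d := by exact_mod_cast hd
  have hk : (0 : ℝ) < (k + 1) * d := by positivity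
  induction D using Nat.strong_induction_on with
  | _ D ih =>
    have hD := h D
    rcases lt_or_ge D d with hlt | hge
    · have h0 : (0 : ℝ) ≤ H (D + s) := by positivity
      refine le_trans ?_ (le_trans (le_add_of_nonneg_left h0) hD)
      rw [div_mul_eq_mul_div, div_le_iff₀ hk, pow_succ, mul_assoc]
      refine mul_le_mul_of_nonneg_left (mul_le_mul_of_nonneg_left ?_ (by positivity)) hc
      have : (D : ℝ) ≤ d := by exact_mod_cast hlt.le
      nlinarith [(by positivity : (0 : ℝ) ≤ (k : ℝ) * d)]
    · have h1 := ih (D - d) (by omega)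
      rw [show D - d + s + d = D + s by omega, Nat.cast_sub hge] at h1
      refine le_trans ?_ hD
      refine le_trans ?_ (add_le_add_left h1 _)
      have h2 := mul_le_mul_of_nonneg_left
        (sub_pow_ge (x := D) (y := d) (by positivity) (by exact_mod_cast hge) k)
        (div_nonneg hc hk.le)
      refine h2.trans (le_of_eq ?_)
      field_simp

/-- The numerical form of Bézout's inequality for a hypersurface section: if `Q` runs through
finitely many incomparable primes containing `P` and `f ∉ P`, then the leading constants of the `Q`
in dimension `k` add up to at most `(n + 1) * deg f` times that of `P` in dimension `k + 1`. -/
lemma LB.step {P : Ideal (MvPolynomial (Fin n) F)} [P.IsPrime] {f : MvPolynomial (Fin n) F}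
    (hfP : f ∉ P) {d : ℕ} (hd1 : 1 ≤ d) (hd : f.totalDegree ≤ d) {k : ℕ} (hk : k ≤ n)
    (S : Finset (Ideal (MvPolynomial (Fin n) F))) (hp : ∀ Q ∈ S, Q.IsPrime)
    (hinc : ∀ Q ∈ S, ∀ Q' ∈ S, Q' ≤ Q → Q' = Q) (hJ : ∀ Q ∈ S, P ⊔ Ideal.span {f} ≤ Q)
    (c : Ideal (MvPolynomial (Fin n) F) → ℝ) (hc : ∀ Q, 0 ≤ c Q) (hLB : ∀ Q ∈ S, LB Q k (c Q)) :
    LB P (k + 1) ((∑ Q ∈ S, c Q) / ((n + 1) * d)) := by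
  classical
  obtain ⟨e, he⟩ := sum_HF_le S hp hinc hJ
  choose! σ hσ using hLB
  let s := S.sup σ
  have hsum : ∀ D : ℕ, (∑ Q ∈ S, c Q) * (D : ℝ) ^ k ≤ HF (P ⊔ Ideal.span {f}) (D + (s + e)) := by
    intro D
    rw [Finset.sum_mul, ← add_assoc]
    refine le_trans ?_ (Nat.cast_le.2 (he (D + s)))
    push_cast
    refine Finset.sum_le_sum fun Q hQ => (hσ Q hQ D).trans (Nat.cast_le.2 (HF_mono _ ?_))
    have : σ Q ≤ s := Finset.le_sup hQ
    omega
  have hc0 : 0 ≤ ∑ Q ∈ S, c Q := Finset.sum_nonneg fun Q _ => hc Q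
  have hd' : (1 : ℝ) ≤ d := by exact_mod_cast hd1
  have h1 := sum_differences (H := HF P) (s := s + e) (k := k) hd1 hc0 (fun D => by
    have h2 := HF_add_le (le_sup_left : P ≤ P ⊔ Ideal.span {f}) hfP
      (Ideal.mem_sup_right (Ideal.mem_span_singleton_self f)) hd (D + (s + e))
    have h3 : (HF (P ⊔ Ideal.span {f}) (D + (s + e) + d) : ℝ) + HF P (D + (s + e)) ≤
      HF P (D + (s + e) + d) := by exact_mod_cast h2
    have h4 : (HF (P ⊔ Ideal.span {f}) (D + (s + e)) : ℝ) ≤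
      HF (P ⊔ Ideal.span {f}) (D + (s + e) + d) := Nat.cast_le.2 (HF_mono _ (by omega))
    linarith [hsum D])
  refine LB.mono ⟨s + e + d, fun D => by simpa [add_assoc] using h1 D⟩ ?_
  refine div_le_div_of_nonneg_left hc0 (by positivity) ?_
  refine mul_le_mul_of_nonneg_right ?_ (by positivity)
  have : (k : ℝ) ≤ n := by exact_mod_cast hk
  linarith

lemma TD.le {P : Ideal (MvPolynomial (Fin n) F)} [P.IsPrime] {k : ℕ}
    (h : TD F (MvPolynomial (Fin n) F ⧸ P) k) : k ≤ n := by
  obtain ⟨y, hy⟩ := h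
  have h1 := hy.cardinalMk_le_trdeg.trans
    (trdeg_le_of_surjective (Ideal.Quotient.mkₐ F P) (Ideal.Quotient.mkₐ_surjective F P))
  simpa using h1

/-- A prime of transcendence degree zero is maximal. -/
lemma TD.one_of_not_isMaximal {P : Ideal (MvPolynomial (Fin n) F)} [P.IsPrime]
    (h : ¬ P.IsMaximal) : TD F (MvPolynomial (Fin n) F ⧸ P) 1 := by
  by_contra hTD
  apply h
  have halg : Algebra.IsAlgebraic F (MvPolynomial (Fin n) F ⧸ P) := by
    refine ⟨fun x => ?_⟩
    by_contra hx
    exact hTD ⟨fun _ => x, (algebraicIndependent_unique_type_iff).2 hx⟩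
  exact Ideal.Quotient.maximal_of_isField _
    (isField_of_isIntegral_of_isField' (R := F) (Field.toIsField F))

/-- **Bézout bound, relative form.** The equations are imposed one at a time: a component contained
in the next hypersurface is kept, any other one is replaced by the components of its section, whose
dimension is one less. The bound is read off backwards, from the last components to `P`. -/
lemma LB.tree {d : ℕ} (hd1 : 1 ≤ d) (l : List (MvPolynomial (Fin n) F))
    (hl : ∀ f ∈ l, f.totalDegree ≤ d) (P : Ideal (MvPolynomial (Fin n) F)) (hP : P.IsPrime) {k : ℕ}
    (h : TD F (MvPolynomial (Fin n) F ⧸ P) k) :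
    LB P k ((((P ⊔ Ideal.span {f | f ∈ l}).minimalPrimes.ncard : ℕ) : ℝ) /
      (((n : ℝ) + 1) ^ n * ((n + 1) * d) ^ l.length)) := by
  classical
  have hd' : (1 : ℝ) ≤ d := by exact_mod_cast hd1
  have hnd : (1 : ℝ) ≤ (n + 1) * d := by nlinarith [(by positivity : (0 : ℝ) ≤ (n : ℝ) * d)]
  induction l generalizing P k with
  | nil =>
    have : (P ⊔ Ideal.span {f | f ∈ ([] : List (MvPolynomial (Fin n) F))}).minimalPrimes = {P} := by
      simp [Ideal.minimalPrimes_eq_subsingleton_self]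
    rw [this]
    simpa using h.lb h.le
  | cons f l ih =>
    have hspan : Ideal.span {g | g ∈ f :: l} = Ideal.span {f} ⊔ Ideal.span {g | g ∈ l} := by
      rw [← Ideal.span_union]
      congr 1
      ext g
      simp
    rw [hspan, ← sup_assoc, List.length_cons]
    have hl' : ∀ g ∈ l, g.totalDegree ≤ d := fun g hg => hl g (List.mem_cons_of_mem _ hg)
    by_cases hf : f ∈ P
    · have : P ⊔ Ideal.span {f} = P := sup_eq_left.2 ((Ideal.span_singleton_le_iff_mem _).2 hf)
      rw [this]
      refine (ih hl' P hP h).mono ?_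
      refine div_le_div_of_nonneg_left (by positivity) (by positivity) ?_
      refine mul_le_mul_of_nonneg_left (pow_le_pow_right₀ hnd (by omega)) (by positivity)
    · have hfin := (P ⊔ Ideal.span {f}).finite_minimalPrimes_of_isNoetherianRing
      let S := hfin.toFinset
      have hS : ∀ Q, Q ∈ S ↔ Q ∈ (P ⊔ Ideal.span {f}).minimalPrimes := fun Q => hfin.mem_toFinset
      let N : Ideal (MvPolynomial (Fin n) F) → ℕ := fun Q =>
        (Q ⊔ Ideal.span {g | g ∈ l}).minimalPrimes.ncard
      have hN : ((P ⊔ Ideal.span {f}) ⊔ Ideal.span {g | g ∈ l}).minimalPrimes.ncard ≤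
          ∑ Q ∈ S, N Q := by
        have hsub : ((P ⊔ Ideal.span {f}) ⊔ Ideal.span {g | g ∈ l}).minimalPrimes ⊆
            ⋃ Q ∈ S, (Q ⊔ Ideal.span {g | g ∈ l}).minimalPrimes := by
          intro M hM
          have hMp := hM.1.1
          obtain ⟨Q, hQ, hQM⟩ := Ideal.exists_minimalPrimes_le (le_sup_left.trans hM.1.2)
          simp only [Set.mem_iUnion]
          refine ⟨Q, (hS Q).2 hQ, ⟨hMp, sup_le hQM (le_sup_right.trans hM.1.2)⟩, ?_⟩
          rintro M' ⟨hM'p, hM'⟩ hle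
          exact hM.2 ⟨hM'p, (sup_le_sup_right hQ.1.2 _).trans hM'⟩ hle
        refine (Set.ncard_le_ncard hsub ?_).trans (Finset.set_ncard_biUnion_le _ _)
        exact S.finite_toSet.biUnion fun Q _ => Ideal.finite_minimalPrimes_of_isNoetherianRing _ _
      have step : ∀ k, TD F (MvPolynomial (Fin n) F ⧸ P) (k + 1) →
          LB P (k + 1) (((((P ⊔ Ideal.span {f}) ⊔ Ideal.span {g | g ∈ l}).minimalPrimes.ncard : ℕ)
            : ℝ) / (((n : ℝ) + 1) ^ n * ((n + 1) * d) ^ (l.length + 1))) := by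
        intro k h
        have hk := h.le
        have h1 := LB.step (P := P) hf hd1 (hl f List.mem_cons_self) (k := k) (by omega) S
          (fun Q hQ => ((hS Q).1 hQ).1.1)
          (fun Q hQ Q' hQ' hle => le_antisymm hle (((hS Q).1 hQ).2 ((hS Q').1 hQ').1 hle))
          (fun Q hQ => ((hS Q).1 hQ).1.2)
          (fun Q => (N Q : ℝ) / (((n : ℝ) + 1) ^ n * ((n + 1) * d) ^ l.length))
          (fun Q => by positivity)
          (fun Q hQ => ih hl' Q ((hS Q).1 hQ).1.1 (h.of_mem_minimalPrimes ((hS Q).1 hQ)))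
        refine h1.mono ?_
        rw [← Finset.sum_div, div_div, mul_assoc, ← pow_succ]
        refine div_le_div_of_nonneg_right ?_ (by positivity)
        exact_mod_cast hN
      rcases k with _ | k
      · by_cases hmax : P.IsMaximal
        · -- a maximal ideal not containing `f` leaves no component at all
          have htop : P ⊔ Ideal.span {f} = ⊤ := by
            refine hmax.1.2 _ (lt_of_le_of_ne le_sup_left fun heq => hf ?_)
            rw [heq]
            exact Ideal.mem_sup_right (Ideal.mem_span_singleton_self f)
          rw [htop, top_sup_eq, Ideal.minimalPrimes_top]
          exact ⟨0, fun D => by simp⟩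
        · obtain ⟨σ, hσ⟩ := step 0 (TD.one_of_not_isMaximal hmax)
          refine ⟨1 + σ, fun D => ?_⟩
          have h1 := hσ (D + 1)
          rw [add_assoc] at h1
          refine le_trans (mul_le_mul_of_nonneg_left ?_ (by positivity)) h1
          push_cast
          simp
      · exact step k h

/-- **Bézout bound.** The number of irreducible components of the zero locus of `l` is polynomial
in the degrees of the equations. -/
lemma ncard_minimalPrimes_le {d : ℕ} (hd1 : 1 ≤ d) (l : List (MvPolynomial (Fin n) F))
    (hl : ∀ f ∈ l, f.totalDegree ≤ d) :
    (Ideal.span {f | f ∈ l}).minimalPrimes.ncard ≤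
      2 ^ n * ((n + 1) ^ n * ((n + 1) * d) ^ l.length) := by
  have hbot : (⊥ : Ideal (MvPolynomial (Fin n) F)).IsPrime := Ideal.isPrime_bot
  have hTD : TD F (MvPolynomial (Fin n) F ⧸ (⊥ : Ideal (MvPolynomial (Fin n) F))) n := by
    let e := AlgEquiv.quotientBot F (MvPolynomial (Fin n) F)
    exact ⟨e.symm ∘ X, (algebraicIndependent_X (Fin n) F).map' (f := e.symm.toAlgHom)
      e.symm.injective⟩
  obtain ⟨s, hs⟩ := LB.tree hd1 l hl ⊥ hbot hTD
  rw [bot_sup_eq] at hs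
  set M := (Ideal.span {f | f ∈ l}).minimalPrimes.ncard
  -- at `D = s + 1` the upper bound `(D + s + 1) ^ n` is exactly `2 ^ n * D ^ n`
  have h1 := (hs (s + 1)).trans (Nat.cast_le.2 (HF_bot_le (s + 1 + s)))
  have hd' : (1 : ℝ) ≤ d := by exact_mod_cast hd1
  have hpos : (0 : ℝ) < ((n : ℝ) + 1) ^ n * ((n + 1) * d) ^ l.length := by positivity
  rw [div_mul_eq_mul_div, div_le_iff₀ hpos] at h1
  push_cast at h1
  rw [show (s : ℝ) + 1 + s + 1 = 2 * (s + 1) by ring, mul_pow] at h1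
  have h2 : (0 : ℝ) < (s + 1) ^ n := by positivity
  have h3 : (M : ℝ) ≤ 2 ^ n * (((n : ℝ) + 1) ^ n * ((n + 1) * d) ^ l.length) := by
    refine le_of_mul_le_mul_right ?_ h2
    linarith
  exact_mod_cast h3

/-! ### Counting bad choices for one component -/

/-- A set of polynomials of degree at most `γ` that are congruent modulo `Q` is rare among all such
polynomials: the Hilbert function of `Q` exceeds `γ` when `Q` is not maximal. -/
lemma card_congruent_le [Finite F] {Q : Ideal (MvPolynomial (Fin n) F)} [Q.IsPrime]
    (hmax : ¬ Q.IsMaximal) (γ : ℕ) (B : Set (MvPolynomial (Fin n) F))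
    (hB : B ⊆ restrictTotalDegree (Fin n) F γ) (hQ : ∀ g ∈ B, ∀ g' ∈ B, g - g' ∈ Q) :
    B.ncard * 2 ^ (γ + 1) ≤ Nat.card (restrictTotalDegree (Fin n) F γ) := by
  have hfin : Finite (restrictTotalDegree (Fin n) F γ) := Module.finite_of_finite F
  generalize hV : restrictTotalDegree (Fin n) F γ = V at *
  have hfd : Module.Finite F V := by subst hV; infer_instance
  obtain ⟨φ, hφ⟩ : ∃ φ : V →ₗ[F] (MvPolynomial (Fin n) F ⧸ Q),
    φ = (Ideal.Quotient.mkₐ F Q).toLinearMap ∘ₗ V.subtype := ⟨_, rfl⟩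
  have hker : ∀ v : V, φ v = 0 ↔ (v : MvPolynomial (Fin n) F) ∈ Q := fun v => by
    rw [hφ]; exact Ideal.Quotient.eq_zero_iff_mem
  have hHF : γ + 1 ≤ Module.finrank F (LinearMap.range φ) := by
    rw [hφ, LinearMap.range_comp, Submodule.range_subtype, ← hV]
    have h1 : γ + 1 ≤ HF Q γ := by simpa using (TD.one_of_not_isMaximal hmax).le_HF γ
    exact h1
  have hcard : ∀ (M : Type) [AddCommGroup M] [Module F M] [Module.Finite F M],
      Nat.card M = Nat.card F ^ Module.finrank F M := fun M => Module.natCard_eq_pow_finrank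
  have hcardV := hcard V
  have hcardker := hcard (LinearMap.ker φ)
  have hq : 2 ≤ Nat.card F := Finite.one_lt_card
  have hBker : B.ncard ≤ Nat.card (LinearMap.ker φ) := by
    rcases B.eq_empty_or_nonempty with h0 | ⟨g0, hg0⟩
    · simp [h0]
    · rw [← Nat.card_coe_set_eq]
      refine Nat.card_le_card_of_injective (fun g : B =>
        (⟨⟨g - g0, V.sub_mem (hB g.2) (hB hg0)⟩, LinearMap.mem_ker.2 ((hker _).2 (hQ g g.2 g0 hg0))⟩ :
        LinearMap.ker φ)) ?_
      intro g g' h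
      simpa [Subtype.ext_iff] using h
  rw [hcardV, ← LinearMap.finrank_range_add_finrank_ker φ, pow_add (Nat.card F), mul_comm]
  refine Nat.mul_le_mul ?_ (hBker.trans hcardker.le)
  exact (Nat.pow_le_pow_left hq _).trans (Nat.pow_le_pow_right (by omega) hHF)

/-- The solutions `g` of `a + g ^ p * s ∈ Q` are congruent modulo `Q`: the difference of two of them
satisfies `(g - g') ^ p * s ∈ Q`. -/
lemma card_coset_le [Finite F] (p : ℕ) [Fact p.Prime] [CharP F p]
    {Q : Ideal (MvPolynomial (Fin n) F)} [Q.IsPrime] (hmax : ¬ Q.IsMaximal)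
    {s : MvPolynomial (Fin n) F} (hs : s ∉ Q) (a : MvPolynomial (Fin n) F) (γ : ℕ) :
    {g : MvPolynomial (Fin n) F | g.totalDegree ≤ γ ∧ a + g ^ p * s ∈ Q}.ncard * 2 ^ (γ + 1) ≤
      Nat.card (restrictTotalDegree (Fin n) F γ) := by
  refine card_congruent_le hmax γ _ (fun g hg => (mem_restrictTotalDegree _ _ _).2 hg.1) ?_
  intro g hg g' hg'
  have h1 : (g - g') ^ p * s ∈ Q := by
    rw [sub_pow_char]
    convert Q.sub_mem hg.2 hg'.2 using 1
    ring
  exact Ideal.IsPrime.mem_of_pow_mem inferInstance p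
    ((Ideal.IsPrime.mem_or_mem inferInstance h1).resolve_right hs)

/-! ### Derivatives of the random polynomial -/

lemma totalDegree_derivation_le (D : Derivation F (MvPolynomial (Fin n) F) (MvPolynomial (Fin n) F))
    {c : ℕ} (hc : ∀ j, (D (X j)).totalDegree ≤ c) (f : MvPolynomial (Fin n) F) :
    (D f).totalDegree ≤ f.totalDegree + c := by
  have hD : D = mkDerivation F fun j => D (X j) := derivation_ext fun j => by simp
  rw [f.as_sum, map_sum, ← f.as_sum]
  refine totalDegree_finsetSum_le fun v hv => ?_
  rw [hD, mkDerivation_monomial]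
  refine (totalDegree_smul_le _ _).trans ?_
  rw [Finsupp.sum]
  refine totalDegree_finsetSum_le fun j _ => ?_
  rw [smul_eq_mul]
  refine (totalDegree_mul _ _).trans (add_le_add ?_ (hc j))
  refine (totalDegree_monomial_le _ _).trans (le_trans ?_ (le_totalDegree hv))
  have h := Finsupp.degree_mono (tsub_le_self : v - Finsupp.single j 1 ≤ v)
  exact h

lemma derivation_pow_char (p : ℕ) [CharP F p]
    (D : Derivation F (MvPolynomial (Fin n) F) (MvPolynomial (Fin n) F))
    (g : MvPolynomial (Fin n) F) : D (g ^ p) = 0 := by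
  rw [Derivation.leibniz_pow, ← Nat.cast_smul_eq_nsmul (MvPolynomial (Fin n) F), CharP.cast_eq_zero,
    zero_smul]

/-- The term `h ^ p` is invisible to derivations, and so are the coefficients `g_j ^ p`: the
derivative `D_j f` involves the single unknown `g_j`. -/
lemma derivation_fpoly (p : ℕ) [Fact p.Prime] [CharP F p] {m : ℕ}
    {t : Fin n → MvPolynomial (Fin n) F} {s : MvPolynomial (Fin n) F}
    {D : Fin n → Derivation F (MvPolynomial (Fin n) F) (MvPolynomial (Fin n) F)}
    (hD : ∀ i j : Fin n, D i (t j) = if i = j then s else 0)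
    (f0 : MvPolynomial (Fin n) F) (g : Fin n → MvPolynomial (Fin n) F) {j : Fin n}
    (hj : (j : ℕ) < m) :
    D j (fpoly F p m t f0 g 0) = D j f0 + g j ^ p * s := by
  have h0 : (0 : MvPolynomial (Fin n) F) ^ p = 0 := zero_pow (Fact.out : p.Prime).ne_zero
  rw [fpoly, h0, add_zero, map_add, map_sum]
  congr 1
  rw [Finset.sum_eq_single j]
  · rw [if_pos hj, Derivation.leibniz, derivation_pow_char, hD, if_pos rfl, smul_zero, add_zero,
      smul_eq_mul]
  · intro k _ hk
    split_ifs
    · rw [Derivation.leibniz, derivation_pow_char, hD, if_neg (Ne.symm hk), smul_zero, smul_zero,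
        add_zero]
    · exact map_zero _
  · simp

lemma totalDegree_fpoly_le (p : ℕ) [Fact p.Prime] (m : ℕ) {t : Fin n → MvPolynomial (Fin n) F}
    {f0 : MvPolynomial (Fin n) F} {g : Fin n → MvPolynomial (Fin n) F} {d : ℕ}
    (hf0 : f0.totalDegree ≤ d) (hd : tauDeg F n t ≤ d)
    (hg : ∀ j, (g j).totalDegree ≤ (d - tauDeg F n t) / p) :
    (fpoly F p m t f0 g 0).totalDegree ≤ d := by
  have h0 : (0 : MvPolynomial (Fin n) F) ^ p = 0 := zero_pow (Fact.out : p.Prime).ne_zero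
  rw [fpoly, h0, add_zero]
  refine (totalDegree_add _ _).trans (max_le hf0 (totalDegree_finsetSum_le fun j _ => ?_))
  split_ifs
  · have h1 : (t j).totalDegree ≤ tauDeg F n t :=
      Finset.le_sup (f := fun j => (t j).totalDegree) (Finset.mem_univ j)
    have h2 := (totalDegree_pow (g j) p).trans (Nat.mul_le_mul_left p (hg j))
    have h3 := Nat.mul_div_le (d - tauDeg F n t) p
    have h4 := totalDegree_mul (g j ^ p) (t j)
    omega
  · simp

/-! ### Dimension of locally closed sets -/

/-- A locally closed subset of a spectrum is sober, so its topological dimension is that of its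
poset of points. -/
lemma krullDim_eq_of_open_closed {R : Type} [CommRing R] {W U Z : Set (PrimeSpectrum R)}
    (hU : IsOpen U) (hZ : IsClosed Z) (hW : W = U ∩ Z) :
    topologicalKrullDim W = Order.krullDim W := by
  have h1 : QuasiSober U := hU.isOpenEmbedding_subtypeVal.quasiSober
  have h2 : QuasiSober W := hW ▸ QuasiSober.inter_of_isClosed_of_quasiSober_left U hZ
  let e : W ≃o (TopologicalSpace.IrreducibleCloseds W)ᵒᵈ :=
    { __ := irreducibleSetEquivPoints.toEquiv.symm.trans OrderDual.toDual
      map_rel_iff' := fun {p q} => (RelIso.symm irreducibleSetEquivPoints).map_rel_iff.trans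
        ((subtype_specializes_iff p q).trans (PrimeSpectrum.le_iff_specializes p.1 q.1).symm) }
  rw [Order.krullDim_eq_of_orderIso e, Order.krullDim_orderDual, topologicalKrullDim]

/-- If cutting the locally closed set `W = U ∩ V(I)` down to `W'` does not lower its dimension, then
`W'` contains the generic point of some component of `W`, and this point is not closed. -/
lemma exists_minimalPrime_of_not_drop {R : Type} [CommRing R] {W W' U : Set (PrimeSpectrum R)}
    {I : Ideal R} (hU : IsOpen U) (hW : W = U ∩ PrimeSpectrum.zeroLocus I)
    {Z' : Set (PrimeSpectrum R)} (hZ' : IsClosed Z') (hW' : W' = U ∩ Z') (hWW' : W' ⊆ W) {k : ℕ}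
    (hdim : topologicalKrullDim W ≤ ((k + 1 : ℕ) : WithBot ℕ∞))
    (hdim' : ¬ topologicalKrullDim W' ≤ (k : WithBot ℕ∞)) :
    ∃ Q ∈ W', Q.asIdeal ∈ I.minimalPrimes ∧ ¬ Q.asIdeal.IsMaximal := by
  rw [krullDim_eq_of_open_closed hU (PrimeSpectrum.isClosed_zeroLocus _) hW] at hdim
  rw [krullDim_eq_of_open_closed hU hZ' hW', not_le] at hdim'
  have hk : ((k + 1 : ℕ) : WithBot ℕ∞) ≤ Order.krullDim W' := by
    have := ENat.WithBot.add_one_le_iff.2 hdim'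
    exact_mod_cast this
  obtain ⟨l, hl⟩ := Order.le_krullDim_iff.1 hk
  refine ⟨l.head, l.head.2, ⟨⟨l.head.1.2, ?_⟩, ?_⟩, ?_⟩
  · exact (hW.subset (hWW' l.head.2)).2
  · rintro Q ⟨hQ, hIQ⟩ hle
    by_contra hnot
    let q : PrimeSpectrum R := ⟨Q, hQ⟩
    have hlt : q < l.head.1 := lt_of_le_not_ge hle hnot
    have hq : q ∈ W := by
      rw [hW]
      refine ⟨?_, hIQ⟩
      have h1 : l.head.1 ∈ U := by
        exact (hW'.subset l.head.2).1
      exact ((PrimeSpectrum.le_iff_specializes _ _).1 hlt.le).mem_open hU h1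
    let l' : LTSeries W := (l.map (Set.inclusion hWW') (fun a b h => h)).cons ⟨q, hq⟩ hlt
    have h2 := (Order.LTSeries.length_le_krullDim l').trans hdim
    have h3 : l'.length = k + 1 + 1 := by
      change 0 + l.length + 1 = k + 1 + 1
      omega
    rw [h3] at h2
    have : k + 1 + 1 ≤ k + 1 := by exact_mod_cast h2
    omega
  · intro hmax
    have h1 := l.step ⟨0, by omega⟩
    have h2 : l.head.1 < (l.toFun (Fin.succ ⟨0, by omega⟩)).1 := h1
    have h3 := hmax.eq_of_le (l.toFun (Fin.succ ⟨0, by omega⟩)).1.2.ne_top h2.le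
    exact h2.ne (PrimeSpectrum.ext h3)

/-! ### The proportion of bad choices -/

/-- The equations of `W_i`, listed with one (possibly zero) entry for each of the `n` coordinates:
this keeps their number independent of `i`. -/
def eqn (p m : ℕ) (t : Fin n → MvPolynomial (Fin n) F)
    (D : Fin n → Derivation F (MvPolynomial (Fin n) F) (MvPolynomial (Fin n) F))
    (f0 : MvPolynomial (Fin n) F) (g : Fin n → MvPolynomial (Fin n) F) (i : ℕ) (j : Fin n) :
    MvPolynomial (Fin n) F :=
  if (j : ℕ) < i then D j (fpoly F p m t f0 g 0) else if m ≤ (j : ℕ) then t j else 0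

lemma Wset_eq (p : ℕ) {m : ℕ} (t : Fin n → MvPolynomial (Fin n) F)
    (U : Set (PrimeSpectrum (MvPolynomial (Fin n) F)))
    (D : Fin n → Derivation F (MvPolynomial (Fin n) F) (MvPolynomial (Fin n) F))
    (f0 : MvPolynomial (Fin n) F) (g : Fin n → MvPolynomial (Fin n) F) {i : ℕ} (hi : i ≤ m) :
    Wset F p m t U D f0 g i = U ∩ PrimeSpectrum.zeroLocus
      (Ideal.span {f | f ∈ List.ofFn (eqn p m t D f0 g i)} : Ideal (MvPolynomial (Fin n) F)) := by
  ext P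
  rw [PrimeSpectrum.zeroLocus_span]
  simp only [Wset, Xpts, paramIdeal, Ideal.span_le, Set.image_subset_iff, Set.mem_ofPred_eq,
    Set.mem_inter_iff, PrimeSpectrum.mem_zeroLocus, and_assoc, and_congr_right_iff]
  intro _
  constructor
  · rintro ⟨h1, h2⟩ f hf
    obtain ⟨j, rfl⟩ := (List.mem_ofFn' _ _).1 hf
    rw [eqn]
    split_ifs with h3 h4
    · exact h2 j h3
    · exact h1 h4
    · exact P.asIdeal.zero_mem
  · intro h
    have h' : ∀ j, eqn p m t D f0 g i j ∈ P.asIdeal := fun j => h ((List.mem_ofFn' _ _).2 ⟨j, rfl⟩)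
    refine ⟨fun j hj => ?_, fun j hj => ?_⟩
    · have := h' j
      have hj' : m ≤ (j : ℕ) := hj
      rwa [eqn, if_neg (by omega), if_pos hj'] at this
    · have := h' j
      rwa [eqn, if_pos hj] at this

/-- The choices of `g_{i+1}` for which the dimension does not drop are few: each of them puts the
generic point `Q` of some component of `W_i` on the hypersurface `D_{i+1} f = 0`. -/
lemma card_bad_le [Finite F] (p : ℕ) [Fact p.Prime] [CharP F p] {m : ℕ} (hmn : m ≤ n)
    {t : Fin n → MvPolynomial (Fin n) F} {s : MvPolynomial (Fin n) F}
    {U : Set (PrimeSpectrum (MvPolynomial (Fin n) F))} (hU : IsOpen U)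
    (hsX : ∀ P ∈ Xpts F m t U, s ∉ P.asIdeal)
    {D : Fin n → Derivation F (MvPolynomial (Fin n) F) (MvPolynomial (Fin n) F)}
    (hD : ∀ i j : Fin n, D i (t j) = if i = j then s else 0) {i : ℕ} (him : i < m)
    (f0 : MvPolynomial (Fin n) F) (g : Fin n → MvPolynomial (Fin n) F) (γ : ℕ)
    (hdim : topologicalKrullDim ↥(Wset F p m t U D f0 g i) ≤ ((m - i : ℕ) : WithBot ℕ∞)) :
    {gn : MvPolynomial (Fin n) F | gn.totalDegree ≤ γ ∧ ¬ topologicalKrullDim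
      ↥(Wset F p m t U D f0 (Function.update g ⟨i, Nat.lt_of_lt_of_le him hmn⟩ gn) (i + 1)) ≤
        ((m - i - 1 : ℕ) : WithBot ℕ∞)}.ncard * 2 ^ (γ + 1) ≤
    (Ideal.span {f | f ∈ List.ofFn (eqn p m t D f0 g i)}).minimalPrimes.ncard *
      Nat.card (restrictTotalDegree (Fin n) F γ) := by
  classical
  set I := Ideal.span {f | f ∈ List.ofFn (eqn p m t D f0 g i)} with hI
  set b : Fin n := ⟨i, Nat.lt_of_lt_of_le him hmn⟩ with hb
  have hfin := I.finite_minimalPrimes_of_isNoetherianRing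
  have hV : Finite (restrictTotalDegree (Fin n) F γ) := Module.finite_of_finite F
  let B : Ideal (MvPolynomial (Fin n) F) → Set (MvPolynomial (Fin n) F) := fun Q =>
    {gn | gn.totalDegree ≤ γ ∧ D b f0 + gn ^ p * s ∈ Q}
  have hBfin : ∀ Q, (B Q).Finite := fun Q =>
    (Set.toFinite (restrictTotalDegree (Fin n) F γ : Set _)).subset
      fun gn h => (mem_restrictTotalDegree _ _ _).2 h.1
  let S := hfin.toFinset.filter fun Q => ¬ Q.IsMaximal ∧ s ∉ Q
  have hsub : {gn : MvPolynomial (Fin n) F | gn.totalDegree ≤ γ ∧ ¬ topologicalKrullDim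
      ↥(Wset F p m t U D f0 (Function.update g b gn) (i + 1)) ≤
        ((m - i - 1 : ℕ) : WithBot ℕ∞)} ⊆ ⋃ Q ∈ S, B Q := by
    rintro gn ⟨hgn, hnot⟩
    have hder : ∀ j : Fin n, (j : ℕ) < m →
        D j (fpoly F p m t f0 (Function.update g b gn) 0) =
          D j f0 + Function.update g b gn j ^ p * s := fun j hj => derivation_fpoly p hD f0 _ hj
    have hWW' : Wset F p m t U D f0 (Function.update g b gn) (i + 1) ⊆ Wset F p m t U D f0 g i := by
      rintro P ⟨hPX, hP⟩
      refine ⟨hPX, fun j hj => ?_⟩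
      have h1 := hP j (by omega)
      have hjb : j ≠ b := fun h => by simp [h, hb] at hj
      rwa [hder j (by omega), Function.update_of_ne hjb,
        ← derivation_fpoly p hD f0 g (hj.trans him)] at h1
    rw [show m - i = m - i - 1 + 1 by omega] at hdim
    obtain ⟨Q, hQ, hQI, hmax⟩ := exists_minimalPrime_of_not_drop hU
      (Wset_eq p t U D f0 g him.le) (PrimeSpectrum.isClosed_zeroLocus _)
      (Wset_eq p t U D f0 (Function.update g b gn) him) hWW' hdim hnot
    have hmem := hQ.2 b (by simp [hb])
    rw [hder b him, Function.update_self] at hmem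
    simp only [Set.mem_iUnion]
    exact ⟨Q.asIdeal, Finset.mem_filter.2 ⟨hfin.mem_toFinset.2 hQI, hmax, hsX Q hQ.1⟩, hgn, hmem⟩
  have h1 := (Set.ncard_le_ncard hsub (S.finite_toSet.biUnion fun Q _ => hBfin Q)).trans
    (Finset.set_ncard_biUnion_le _ _)
  refine (Nat.mul_le_mul_right _ h1).trans ?_
  rw [Finset.sum_mul]
  refine (Finset.sum_le_card_nsmul S _ (Nat.card (restrictTotalDegree (Fin n) F γ)) ?_).trans ?_
  · intro Q hQ
    simp only [S, Finset.mem_filter, hfin.mem_toFinset] at hQ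
    have hQp : Q.IsPrime := hQ.1.1.1
    exact card_coset_le p hQ.2.1 hQ.2.2 _ γ
  · rw [smul_eq_mul, Set.ncard_eq_toFinset_card _ hfin]
    exact Nat.mul_le_mul_right _ (Finset.card_filter_le _ _)

/-- The Bézout bound for `W_i`. -/
lemma ncard_components_le (p : ℕ) [Fact p.Prime] {m : ℕ} {t : Fin n → MvPolynomial (Fin n) F}
    {D : Fin n → Derivation F (MvPolynomial (Fin n) F) (MvPolynomial (Fin n) F)} {c : ℕ}
    (hc : ∀ i j, (D i (X j)).totalDegree ≤ c)
    {f0 : MvPolynomial (Fin n) F} {g : Fin n → MvPolynomial (Fin n) F} {d : ℕ}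
    (hf0 : f0.totalDegree ≤ d) (hd : tauDeg F n t ≤ d)
    (hg : ∀ j, (g j).totalDegree ≤ (d - tauDeg F n t) / p) (i : ℕ) :
    (Ideal.span {f | f ∈ List.ofFn (eqn p m t D f0 g i)}).minimalPrimes.ncard ≤
      2 ^ n * ((n + 1) ^ n * ((n + 1) * (d + c + 1)) ^ n) := by
  have h := ncard_minimalPrimes_le (d := d + c + 1) (by omega) (List.ofFn (eqn p m t D f0 g i)) ?_
  · rwa [List.length_ofFn] at h
  · intro f hf
    obtain ⟨j, rfl⟩ := (List.mem_ofFn' _ _).1 hf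
    rw [eqn]
    split_ifs with h3 h4
    · have h1 := totalDegree_derivation_le (D j) (hc j) (fpoly F p m t f0 g 0)
      have h2 := totalDegree_fpoly_le p m hf0 hd hg
      omega
    · have h1 : (t j).totalDegree ≤ tauDeg F n t :=
        Finset.le_sup (f := fun j => (t j).totalDegree) (Finset.mem_univ j)
      omega
    · simp

/-- Exponential decay in `γ = (d - τ) / p` beats polynomial growth in `d`. -/
lemma exists_threshold (p n c τ : ℕ) (hp : 0 < p) {ε : ℝ} (hε : 0 < ε) :
    ∃ d0 : ℕ, τ ≤ d0 ∧ ∀ d : ℕ, d0 ≤ d →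
      ((2 ^ n * ((n + 1) ^ n * ((n + 1) * (d + c + 1)) ^ n) : ℕ) : ℝ) ≤
        ε * 2 ^ ((d - τ) / p + 1) := by
  let C : ℝ := 2 ^ n * ((n + 1) ^ n * ((n + 1) * (p + τ + c + 1)) ^ n)
  have hC : 0 < C := by positivity
  have hlim := tendsto_pow_const_div_const_pow_of_one_lt n (r := (2 : ℝ)) (by norm_num)
  obtain ⟨M, hM⟩ := eventually_atTop.1 (hlim.eventually_lt_const (div_pos hε hC))
  refine ⟨τ + p * M, by omega, fun d hd => ?_⟩
  set γ := (d - τ) / p with hγ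
  have hMγ : M ≤ γ := by
    rw [hγ, Nat.le_div_iff_mul_le hp, mul_comm]
    omega
  have hdγ : d + c + 1 ≤ (p + τ + c + 1) * (γ + 1) := by
    have h1 := Nat.div_add_mod (d - τ) p
    have h2 := Nat.mod_lt (d - τ) hp
    rw [← hγ] at h1
    nlinarith [Nat.zero_le ((τ + c + 1) * γ), (by omega : d ≤ p * γ + p + τ)]
  have h1 := hM (γ + 1) (by omega)
  rw [div_lt_div_iff₀ (by positivity) hC] at h1
  have h2 : ((2 ^ n * ((n + 1) ^ n * ((n + 1) * (d + c + 1)) ^ n) : ℕ) : ℝ) ≤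
      C * ((γ + 1 : ℕ) : ℝ) ^ n := by
    have h3 : ((d + c + 1 : ℕ) : ℝ) ≤ (((p + τ + c + 1) * (γ + 1) : ℕ) : ℝ) := Nat.cast_le.2 hdγ
    have h4 : C * ((γ + 1 : ℕ) : ℝ) ^ n =
        2 ^ n * ((n + 1) ^ n * ((n + 1) * (((p + τ + c + 1) * (γ + 1) : ℕ) : ℝ)) ^ n) := by
      simp only [C]
      push_cast
      rw [← mul_assoc ((n : ℝ) + 1), mul_pow _ ((γ : ℝ) + 1)]
      ring
    rw [h4]
    push_cast at h3 ⊢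
    gcongr
  linarith [mul_comm C (((γ + 1 : ℕ) : ℝ) ^ n)]

end Helpers

/-- **Claim 1** in the proof of Lemma 4.2 (Singularities of high degree off `V`).
With notation as in that proof — `X ⊆ 𝔸^n` smooth of dimension `m` inside the
neighbourhood `N_x` (where `X` is cut out by the local parameters
`t_{m+1} = ⋯ = t_n = 0`, all `t_i` vanish on `Z`, and `D_i = s·∂_i` are the global
derivations dual to the `dt_i`, with `s` invertible on `X`), and
`f := f_0 + g_1^p t_1 + ⋯ + g_m^p t_m + h^p` with `f_0 ∈ I'_d`, `g_i ∈ S'_γ`,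
`h ∈ I'_η` uniform and independent, `W_i := X ∩ {D_1 f = ⋯ = D_i f = 0}` — for each
`0 ≤ i ≤ m-1`, conditioned on a choice of `f_0, g_1, …, g_i` with `dim W_i ≤ m - i`,
the probability (over the uniform choice of `g_{i+1} ∈ S'_γ`, on which alone
`W_{i+1}` further depends) that `dim W_{i+1} ≤ m - i - 1` is `1 - o(1)` as `d → ∞`. -/
theorem dim_drop_probability_claim1
    (pp : ℕ) [Fact pp.Prime] (hchar : CharP K pp)
    (m : ℕ) (hmn : m ≤ n)
    (t : Fin n → Aff K n) (s : Aff K n)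
    (U : Set (PrimeSpectrum (Aff K n))) (hU : IsOpen U)
    (JZ' : Ideal (Aff K n)) (htZ : ∀ j : Fin n, t j ∈ JZ')
    (hsX : ∀ p ∈ Xpts K m t U, s ∉ p.asIdeal)
    (hXsm : ∀ p ∈ Xpts K m t U, p.asIdeal.IsMaximal →
      IsRegularLocalOfDim (affLocalRing K n (paramIdeal K m t) p) m)
    (D : Fin n → Derivation K (Aff K n) (Aff K n))
    (hD : ∀ i j : Fin n, D i (t j) = if i = j then s else 0) :
    ∀ ε : ℝ, 0 < ε → ∃ d0 : ℕ, ∀ d : ℕ, d0 ≤ d →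
    ∀ i : ℕ, ∀ him : i < m,
    ∀ f0 ∈ Idd' K n JZ' d,
    ∀ g : Fin n → Aff K n,
      (∀ j : Fin n, (g j).totalDegree ≤ (d - tauDeg K n t) / pp) →
      topologicalKrullDim ↥(Wset K pp m t U D f0 g i) ≤ ((m - i : ℕ) : WithBot ℕ∞) →
      1 - ε ≤
        (Nat.card {gn : Aff K n // gn.totalDegree ≤ (d - tauDeg K n t) / pp ∧
          topologicalKrullDim
            ↥(Wset K pp m t U D f0
                (Function.update g ⟨i, Nat.lt_of_lt_of_le him hmn⟩ gn) (i + 1)) ≤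
            ((m - i - 1 : ℕ) : WithBot ℕ∞)} : ℝ) /
        (Nat.card {gn : Aff K n // gn.totalDegree ≤ (d - tauDeg K n t) / pp} : ℝ) := by
  intro ε hε
  let c := Finset.univ.sup fun i => Finset.univ.sup fun j => (D i (X j)).totalDegree
  have hc : ∀ i j, (D i (X j)).totalDegree ≤ c := fun i j =>
    (Finset.le_sup (f := fun j => (D i (X j)).totalDegree) (Finset.mem_univ j)).trans
      (Finset.le_sup (f := fun i => Finset.univ.sup fun j => (D i (X j)).totalDegree)
        (Finset.mem_univ i))
  obtain ⟨d0, hτ, hd0⟩ := exists_threshold pp n c (tauDeg K n t) (Fact.out : pp.Prime).pos hε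
  refine ⟨d0, fun d hd i him f0 hf0 g hg hdim => ?_⟩
  have hN := ncard_components_le (m := m) pp hc hf0.1 (hτ.trans hd) hg i
  have hbad := card_bad_le pp hmn hU hsX hD him f0 g ((d - tauDeg K n t) / pp) hdim
  have hε' := hd0 d hd
  set γ := (d - tauDeg K n t) / pp
  have hV : Finite (restrictTotalDegree (Fin n) K γ) := Module.finite_of_finite K
  have hcardT : Nat.card (restrictTotalDegree (Fin n) K γ) =
      Nat.card {gn : Aff K n // gn.totalDegree ≤ γ} :=
    Nat.card_congr (Equiv.subtypeEquivRight fun gn => mem_restrictTotalDegree _ _ _)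
  have hT : {gn : Aff K n | gn.totalDegree ≤ γ}.Finite :=
    (Set.toFinite (restrictTotalDegree (Fin n) K γ : Set _)).subset
      fun gn h => (mem_restrictTotalDegree _ _ _).2 h
  have hpos : 0 < Nat.card {gn : Aff K n // gn.totalDegree ≤ γ} := by
    rw [← hcardT]
    exact Nat.card_pos
  rw [hcardT] at hbad
  set P : Aff K n → Prop := fun gn => topologicalKrullDim
    ↥(Wset K pp m t U D f0 (Function.update g ⟨i, Nat.lt_of_lt_of_le him hmn⟩ gn) (i + 1)) ≤
      ((m - i - 1 : ℕ) : WithBot ℕ∞) with hP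
  have hsplit : Nat.card {gn : Aff K n // gn.totalDegree ≤ γ} ≤
      Nat.card {gn : Aff K n // gn.totalDegree ≤ γ ∧ P gn} +
        {gn : Aff K n | gn.totalDegree ≤ γ ∧ ¬ P gn}.ncard := by
    refine le_trans (Set.ncard_le_ncard (s := {gn : Aff K n | gn.totalDegree ≤ γ})
      (t := {gn | gn.totalDegree ≤ γ ∧ P gn} ∪ {gn | gn.totalDegree ≤ γ ∧ ¬ P gn}) ?_ ?_)
      (Set.ncard_union_le _ _)
    · intro gn hgn
      by_cases h : P gn
      · exact Or.inl ⟨hgn, h⟩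
      · exact Or.inr ⟨hgn, h⟩
    · exact (hT.subset fun _ h => h.1).union (hT.subset fun _ h => h.1)
  change 1 - ε ≤ (Nat.card {gn : Aff K n // gn.totalDegree ≤ γ ∧ P gn} : ℝ) / _
  set T := Nat.card {gn : Aff K n // gn.totalDegree ≤ γ}
  set G := Nat.card {gn : Aff K n // gn.totalDegree ≤ γ ∧ P gn}
  set b := {gn : Aff K n | gn.totalDegree ≤ γ ∧ ¬ P gn}.ncard
  have h1 : (b : ℝ) * 2 ^ (γ + 1) ≤ (ε * T) * 2 ^ (γ + 1) := by
    have h2 : (b : ℝ) * 2 ^ (γ + 1) ≤ ((2 ^ n * ((n + 1) ^ n * ((n + 1) * (d + c + 1)) ^ n) : ℕ) : ℝ)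
        * T := by
      exact_mod_cast hbad.trans (Nat.mul_le_mul_right _ hN)
    have h3 := mul_le_mul_of_nonneg_right hε' (Nat.cast_nonneg (α := ℝ) T)
    linarith
  have h2 : (b : ℝ) ≤ ε * T := le_of_mul_le_mul_right h1 (by positivity)
  have h3 : (T : ℝ) ≤ G + b := by exact_mod_cast hsplit
  rw [le_div_iff₀ (by exact_mod_cast hpos)]
  linarith

end ProjBertiniAff
end
end

section
/- With notation as in the proof of the high-degree lemma (f := f_0 + g_1^p t_1 + ... + g_m^p t_m + h^p with f_0 ∈ I_d', g_i ∈ S'_γ, h ∈ I'_η uniform and independent, W_m := X ∩ {D_1 f = ... = D_m f = 0}): conditioned on a choice of f_0, g_1, ..., g_m for which W_m is finite, the probability that H_f ∩ W_m contains no closed point of X of degree > (d-c)/(m+1) is 1 - o(1) as d → ∞. Moreover #W_m = O(d^m) by Bézout's theorem. -/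
/-!
The Bézout bound rests on a deformation. Let `F_1, …, F_n` be polynomials in `n` variables with
`deg F_i ≤ e_i`, and consider `G_i = F_i - T x_i^{e_i+1}` in `A[T]`. Modulo the `G_i` and up to
powers of `T`, every polynomial is a `K[T]`-combination of the `∏ (e_i + 1)` monomials whose
`x_i`-exponent is at most `e_i` (`span_monomials`). On the other hand, by Krull's height theorem,
no component of `V(G_1, …, G_n)` through an isolated point `P` of `V(F_1, …, F_n)` lies in `T = 0`,
since `(P, T)` has height `n + 1`; so `T`-power torsion modulo the `G_i` vanishes at `P`
(`torsion_mem`). Functions separating finitely many isolated points are therefore linearly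
independent over `K[T]`, and there are at most `∏ (e_i + 1)` such points (`bezout`). No multiplicity
theory and no hypothesis on the non-isolated components is needed. For `W_m` the equations are
`D_1 f, …, D_m f, t_{m+1}, …, t_n`, of degree `d + O(1)` for the first `m` and `O(1)` for the rest;
when `W_m` is finite, all its points are closed and isolated (`finite_locus_maximal`), whence
`#W_m = O(d^m)` (`Wset_card`).

For the probability, fix a closed point `P` of `W_m`. As `h ↦ h^p` is additive and `P` is prime, the
`h` with `f ∈ P` form a subset of a coset of `{h ∈ I'_η : h ∈ P}` (`fpoly_fiber_card`). If `P ∉ Z`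
and `deg P > (d-c)/(m+1)`, the fraction of such `h` is thus exponentially small in `d`, which
beats the `O(d^m)` points (`decay`). The points `P ∈ Z` are zeros of all the `t_j` at which `s` is
invertible; there the `t_j` are étale coordinates, so these points lie in an unramified, hence finite,
`K`-scheme independent of `d`, and their degrees are bounded (`etale_degree`). They do not matter
for large `d`.
-/

/-! Affine-chart setup for the proofs of the high-degree lemmas in Poonen,
"Smooth hypersurface sections containing a given subscheme over a finite field". -/

noncomputable section

open MvPolynomial Filter Topology

namespace ProjBertiniAff

variable (K : Type) [Field K] [Fintype K] (n : ℕ)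

variable {n}

/-! ### A Bézout bound for isolated points -/

/-- Induction on `n`, splitting off one variable: a maximal ideal of `R[X]` has height one more
than its contraction to `R`, which is again maximal because `R` is Jacobson. -/
lemma height_maximal {K : Type} [Field K] (n : ℕ) (M : Ideal (MvPolynomial (Fin n) K))
    (hM : M.IsMaximal) : M.height = n := by
  induction n with
  | zero =>
    have hf : IsField (MvPolynomial (Fin 0) K) :=
      (MvPolynomial.isEmptyAlgEquiv K (Fin 0)).toMulEquiv.isField (Field.toIsField K)
    let _ := hf.toField
    have : M = ⊥ := (Ideal.eq_bot_or_top M).resolve_right hM.ne_top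
    subst this
    simp
  | succ n ih =>
    let e := (MvPolynomial.finSuccEquiv K n).toRingEquiv
    let M' := M.comap e.symm.toRingHom
    have hM' : M'.IsMaximal := Ideal.comap_isMaximal_of_surjective _ e.symm.surjective
    let p : Ideal (MvPolynomial (Fin n) K) := M'.under (MvPolynomial (Fin n) K)
    have hp : p.IsMaximal := Polynomial.isMaximal_comap_C_of_isJacobsonRing M'
    have : M'.LiesOver p := ⟨rfl⟩
    have h1 : M'.height = p.height + 1 := Polynomial.height_eq_height_add_one p M'
    rw [ih p hp] at h1
    have h2 : M'.height = M.height := RingEquiv.height_comap e.symm M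
    rw [← h2, h1]
    simp

/-- Let `P` be an isolated zero of the constant terms `G_i(0)` of `n` elements of `A[T]`. If `b` is
`T`-power torsion modulo the `G_i`, then `b(0)` vanishes at `P`. Otherwise a minimal prime of
`(G_1, …, G_n)` inside `(P, T)` would contain `T`, hence equal `(P, T)` by isolation, although its
height is at most `n`. -/
lemma torsion_mem {K : Type} [Field K] {n : ℕ} {P : Ideal (MvPolynomial (Fin n) K)}
    (hP : P.IsMaximal) (G : Fin n → Polynomial (MvPolynomial (Fin n) K))
    (hiso : ∀ Q : Ideal (MvPolynomial (Fin n) K), Q.IsPrime → Q ≤ P →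
      (∀ i, (G i).coeff 0 ∈ Q) → Q = P)
    (hGP : ∀ i, (G i).coeff 0 ∈ P)
    (b : Polynomial (MvPolynomial (Fin n) K)) (k : ℕ)
    (hb : Polynomial.X ^ k * b ∈ Ideal.span (Set.range G)) :
    b.coeff 0 ∈ P := by
  by_contra hbP
  let P' := P.comap (Polynomial.constantCoeff (R := MvPolynomial (Fin n) K))
  have hP' : P'.IsMaximal :=
    Ideal.comap_isMaximal_of_surjective _ Polynomial.constantCoeff_surjective
  have hPP : P'.under (MvPolynomial (Fin n) K) = P := by
    ext x
    simp [P', Ideal.under, Ideal.mem_comap]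
  have : P'.LiesOver P := ⟨hPP.symm⟩
  have hht : P'.height = n + 1 := by
    rw [Polynomial.height_eq_height_add_one P P', height_maximal n P hP]
  have hIP : Ideal.span (Set.range G) ≤ P' := by
    rw [Ideal.span_le]
    rintro _ ⟨i, rfl⟩
    exact hGP i
  obtain ⟨Q, hQ, hQP⟩ := Ideal.exists_minimalPrimes_le hIP
  have hQp : Q.IsPrime := hQ.1.1
  have hXQ : Polynomial.X ∈ Q := by
    rcases hQp.mem_or_mem (hQ.1.2 hb) with h | h
    · exact hQp.mem_of_pow_mem _ h
    · exact absurd (hQP h) hbP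
  -- As `T ∈ Q`, membership in `Q` depends only on the constant term.
  have key : ∀ f, f ∈ Q ↔ Polynomial.C (f.coeff 0) ∈ Q := by
    intro f
    conv_lhs => rw [← Polynomial.divX_mul_X_add f]
    exact Q.add_mem_iff_right (Q.mul_mem_left _ hXQ)
  have hQ0 : Q.comap Polynomial.C = P := by
    refine hiso _ (Ideal.comap_isPrime _ _) ?_ ?_
    · intro x hx
      have := hQP hx
      simpa [P'] using this
    · intro i
      exact (key _).1 (hQ.1.2 (Ideal.subset_span ⟨i, rfl⟩))
  have hQP' : Q = P' := by
    ext f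
    rw [key, ← Ideal.mem_comap, hQ0]
    rfl
  have h3 := Ideal.height_le_card_of_mem_minimalPrimes_span (Set.finite_range G) hQ
  rw [hQP', hht] at h3
  have h4 : (Set.range G).ncard ≤ n := by
    have := Set.ncard_image_le (f := G) (s := Set.univ)
    simpa [Set.image_univ, Set.ncard_univ] using this
  have h5 : ((n + 1 : ℕ) : ℕ∞) ≤ (n : ℕ) := by
    push_cast
    exact h3.trans (by exact_mod_cast h4)
  have := Nat.cast_le.1 h5
  omega

/-- If `T x_i^{e_i+1} = F_i` in the `K[T]`-algebra `M`, with `deg F_i ≤ e_i`, then the image of every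
polynomial lies, after multiplication by a power of `T`, in the span of the monomials with all
exponents `≤ e_i`: the relation rewrites a larger monomial as one of smaller degree. -/
lemma span_monomials {K : Type} [Field K] {n : ℕ} (F : Fin n → MvPolynomial (Fin n) K)
    (e : Fin n → ℕ) (hF : ∀ i, (F i).totalDegree ≤ e i)
    {M : Type} [CommRing M] [Algebra (Polynomial K) M]
    (π : MvPolynomial (Fin n) K →+* M)
    (hπ : ∀ (a : K) f, π (C a * f) = (Polynomial.C a : Polynomial K) • π f)
    (hrel : ∀ i, (Polynomial.X : Polynomial K) • π (X i ^ (e i + 1)) = π (F i))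
    (f : MvPolynomial (Fin n) K) :
    ∃ k : ℕ, (Polynomial.X ^ k : Polynomial K) • π f ∈
      Submodule.span (Polynomial K) (Set.range fun a : (i : Fin n) → Fin (e i + 1) =>
        π (monomial (Finsupp.equivFunOnFinite.symm fun i => (a i : ℕ)) 1)) := by
  set Sp := Submodule.span (Polynomial K) (Set.range fun a : (i : Fin n) → Fin (e i + 1) =>
        π (monomial (Finsupp.equivFunOnFinite.symm fun i => (a i : ℕ)) 1)) with hSp
  let T : Submodule (Polynomial K) M :=
    { carrier := {z | ∃ k : ℕ, (Polynomial.X ^ k : Polynomial K) • z ∈ Sp}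
      zero_mem' := ⟨0, by simp⟩
      add_mem' := by
        rintro x y ⟨k, hk⟩ ⟨l, hl⟩
        refine ⟨k + l, ?_⟩
        rw [smul_add]
        refine Sp.add_mem ?_ ?_
        · rw [add_comm, pow_add, mul_smul]; exact Sp.smul_mem _ hk
        · rw [pow_add, mul_smul]; exact Sp.smul_mem _ hl
      smul_mem' := by
        rintro c x ⟨k, hk⟩
        refine ⟨k, ?_⟩
        rw [smul_comm]; exact Sp.smul_mem _ hk }
  have hXT : ∀ z, (Polynomial.X : Polynomial K) • z ∈ T → z ∈ T := by
    rintro z ⟨k, hk⟩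
    exact ⟨k + 1, by rwa [pow_succ, mul_smul]⟩
  suffices h : ∀ (N : ℕ) (f : MvPolynomial (Fin n) K), f.totalDegree ≤ N → π f ∈ T from
    h _ f le_rfl
  intro N
  induction N using Nat.strong_induction_on with
  | _ N ih =>
  intro f hf
  rw [f.as_sum, map_sum]
  refine Submodule.sum_mem _ fun s hs => ?_
  have hsN : (s.sum fun _ k => k) ≤ N := (le_totalDegree hs).trans hf
  rw [← mul_one (coeff s f), ← C_mul_monomial, hπ]
  refine Submodule.smul_mem _ _ ?_
  by_cases hsm : ∀ i, s i < e i + 1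
  · refine ⟨0, ?_⟩
    rw [pow_zero, one_smul]
    refine Submodule.subset_span ⟨fun i => ⟨s i, hsm i⟩, ?_⟩
    have : (Finsupp.equivFunOnFinite.symm fun i => s i) = s := by ext i; simp
    simp only [this]
  · push Not at hsm
    obtain ⟨i, hi⟩ := hsm
    apply hXT
    have hle : Finsupp.single i (e i + 1) ≤ s := by
      rwa [Finsupp.single_le_iff]
    obtain ⟨u, rfl⟩ := exists_add_of_le hle
    have h1 : (monomial (Finsupp.single i (e i + 1) + u) (1:K)) =
        X i ^ (e i + 1) * monomial u 1 := by
      rw [X_pow_eq_monomial, monomial_mul, one_mul]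
    rw [h1, map_mul, ← smul_mul_assoc, hrel, ← map_mul]
    have h2 : (F i * monomial u 1).totalDegree ≤ e i + u.sum fun _ k => k :=
      (totalDegree_mul _ _).trans (add_le_add (hF i) (totalDegree_monomial_le _ _))
    have h3 : ((Finsupp.single i (e i + 1) + u).sum fun _ k => k) =
        e i + 1 + u.sum fun _ k => k := by
      rw [Finsupp.sum_add_index' (by simp) (by simp), Finsupp.sum_single_index rfl]
    exact ih _ (by omega) _ h2

/-- The bound of `bezout`, with `M` standing for the quotient of `A[T]` by the
`F_i - T x_i^{e_i+1}`. An abstract `M` keeps the unifier from unfolding the quotient. -/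
lemma bezout_aux {K : Type} [Field K] {n : ℕ} (F : Fin n → MvPolynomial (Fin n) K)
    (e : Fin n → ℕ) (hF : ∀ i, (F i).totalDegree ≤ e i)
    {M : Type} [CommRing M] (q : Polynomial (MvPolynomial (Fin n) K) →+* M)
    (hq : RingHom.ker q = Ideal.span (Set.range fun i =>
      Polynomial.C (F i) - Polynomial.X * Polynomial.C (X i ^ (e i + 1)))) (r : ℕ)
    (P : Fin r → Ideal (MvPolynomial (Fin n) K)) (hinj : Function.Injective P)
    (hmax : ∀ j, (P j).IsMaximal) (hFP : ∀ j i, F i ∈ P j)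
    (hiso : ∀ j, ∀ Q : Ideal (MvPolynomial (Fin n) K), Q.IsPrime → Q ≤ P j →
      (∀ i, F i ∈ Q) → Q = P j) :
    r ≤ ∏ i, (e i + 1) := by
  have hsep : ∀ i j, ∃ y, i ≠ j → y ∈ P i ∧ y ∉ P j := by
    intro i j
    by_cases hij : i = j
    · exact ⟨0, fun h => absurd hij h⟩
    have : ¬ P i ≤ P j := fun h => hij (hinj ((hmax i).eq_of_le (hmax j).ne_top h))
    obtain ⟨y, h1, h2⟩ := Set.not_subset.1 this
    exact ⟨y, fun _ => ⟨h1, h2⟩⟩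
  choose y hy using hsep
  let w : Fin r → MvPolynomial (Fin n) K := fun j => ∏ i ∈ Finset.univ.erase j, y i j
  have hw1 : ∀ j, w j ∉ P j := by
    intro j h
    have hp := (hmax j).isPrime
    obtain ⟨i, hi, h⟩ := (Ideal.IsPrime.prod_mem_iff (p := P j)).1 h
    exact (hy i j (Finset.ne_of_mem_erase hi)).2 h
  have hw2 : ∀ i j, i ≠ j → w j ∈ P i := by
    intro i j hij
    exact Ideal.mem_of_dvd _ (Finset.dvd_prod_of_mem (fun i => y i j)
      (Finset.mem_erase.2 ⟨hij, Finset.mem_univ _⟩)) (hy i j hij).1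
  -- `w j` lies in every `P i` with `i ≠ j`, but not in `P j`.
  let G : Fin n → Polynomial (MvPolynomial (Fin n) K) := fun i =>
    Polynomial.C (F i) - Polynomial.X * Polynomial.C (X i ^ (e i + 1))
  have hG0 : ∀ i, (G i).coeff 0 = F i := by intro i; simp [G]
  let φ : Polynomial K →+* Polynomial (MvPolynomial (Fin n) K) := Polynomial.mapRingHom C
  let _ : Algebra (Polynomial K) M :=
    RingHom.toAlgebra (q.comp φ)
  have hsmul : ∀ (a : Polynomial K) (z : Polynomial (MvPolynomial (Fin n) K)),
      a • (q z) = q (φ a * z) := by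
    intro a z
    rw [Algebra.smul_def, map_mul]; rfl
  let π : MvPolynomial (Fin n) K →+* M :=
    q.comp Polynomial.C
  have hspan := span_monomials F e hF π
    (by
      intro a f
      simp only [π, RingHom.comp_apply, hsmul]
      simp [φ])
    (by
      intro i
      simp only [π, RingHom.comp_apply, hsmul]
      symm
      have : G i ∈ RingHom.ker q := hq ▸ Ideal.subset_span ⟨i, rfl⟩
      rw [← sub_eq_zero, ← map_sub, ← RingHom.mem_ker]
      simpa [φ, G] using this)
  choose k hk using fun j => hspan (w j)
  have hli : LinearIndependent (Polynomial K)
      (fun j => (Polynomial.X ^ (k j) : Polynomial K) • π (w j)) := by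
    rw [Fintype.linearIndependent_iff]
    intro g hg
    let a : Fin r → Polynomial K := fun j => g j * Polynomial.X ^ k j
    have ha : q (∑ j, φ (a j) * Polynomial.C (w j)) = 0 := by
      rw [map_sum, ← hg]
      refine Finset.sum_congr rfl fun j _ => ?_
      rw [← mul_smul, ← hsmul]; rfl
    rw [← RingHom.mem_ker, hq] at ha
    -- After cancelling `T ^ l`, evaluating the relation at `T = 0` and at `P j` leaves only the
    -- constant term of the `j`-th coefficient, so each coefficient is divisible by one more `T`.
    have hdvd : ∀ (l : ℕ) j, Polynomial.X ^ l ∣ a j := by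
      intro l
      induction l with
      | zero => simp
      | succ l ih =>
        choose b hb using ih
        have h1 : ∑ j, φ (a j) * Polynomial.C (w j) =
            Polynomial.X ^ l * ∑ j, φ (b j) * Polynomial.C (w j) := by
          rw [Finset.mul_sum]
          refine Finset.sum_congr rfl fun j _ => ?_
          rw [hb j, map_mul]
          simp [φ, mul_assoc]
        rw [h1] at ha
        intro j
        have h2 := torsion_mem (hmax j) G
          (fun Q h1 h2 h3 => hiso j Q h1 h2 fun i => hG0 i ▸ h3 i)
          (fun i => (hG0 i).symm ▸ hFP j i) _ l ha
        have h3 : (∑ j, φ (b j) * Polynomial.C (w j)).coeff 0 = ∑ j, C ((b j).coeff 0) * w j := by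
          simp [φ]
        rw [h3, ← Finset.add_sum_erase _ _ (Finset.mem_univ j)] at h2
        have h4 : ∑ i ∈ Finset.univ.erase j, C ((b i).coeff 0) * w i ∈ P j :=
          Ideal.sum_mem _ fun i hi =>
            Ideal.mul_mem_left _ _ (hw2 j i (Finset.ne_of_mem_erase hi).symm)
        rw [Ideal.add_mem_iff_left _ h4] at h2
        have h5 := ((hmax j).isPrime.mem_or_mem h2).resolve_right (hw1 j)
        have h6 : (b j).coeff 0 = 0 := by
          by_contra hne
          exact (hmax j).ne_top (Ideal.eq_top_of_isUnit_mem _ h5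
            ((isUnit_iff_ne_zero.2 hne).map C))
        rw [hb j, pow_succ]
        exact mul_dvd_mul_left _ (Polynomial.X_dvd_iff.2 h6)
    intro j
    have : a j = 0 := by
      ext d
      exact Polynomial.X_pow_dvd_iff.1 (hdvd (d + 1) j) d (by omega)
    exact (mul_eq_zero.1 this).resolve_right (pow_ne_zero _ Polynomial.X_ne_zero)
  classical
  have hcard := linearIndependent_le_span_aux' _ hli _ (by
    rintro _ ⟨j, rfl⟩
    exact hk j)
  rw [Fintype.card_fin] at hcard
  refine hcard.trans ((Fintype.card_range_le _).trans ?_)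
  simp

/-- The quotient by `I`, in a form that hides its construction. -/
lemma exists_hom_ker {S : Type} [CommRing S] (I : Ideal S) :
    ∃ (M : Type) (_ : CommRing M) (q : S →+* M), RingHom.ker q = I :=
  ⟨S ⧸ I, inferInstance, Ideal.Quotient.mk I, Ideal.mk_ker⟩

/-- Bézout inequality for isolated points: `n` polynomials in `n` variables, of degrees at most
`e_1, …, e_n`, have at most `∏ (e_i + 1)` isolated common zeros, whatever their other components. -/
lemma bezout {K : Type} [Field K] {n : ℕ} (F : Fin n → MvPolynomial (Fin n) K)
    (e : Fin n → ℕ) (hF : ∀ i, (F i).totalDegree ≤ e i) (r : ℕ)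
    (P : Fin r → Ideal (MvPolynomial (Fin n) K)) (hinj : Function.Injective P)
    (hmax : ∀ j, (P j).IsMaximal) (hFP : ∀ j i, F i ∈ P j)
    (hiso : ∀ j, ∀ Q : Ideal (MvPolynomial (Fin n) K), Q.IsPrime → Q ≤ P j →
      (∀ i, F i ∈ Q) → Q = P j) :
    r ≤ ∏ i, (e i + 1) := by
  obtain ⟨M, _, q, hq⟩ := exists_hom_ker (Ideal.span (Set.range fun i : Fin n =>
    Polynomial.C (F i) - Polynomial.X * Polynomial.C (X i ^ (e i + 1))))
  exact bezout_aux F e hF q hq r P hinj hmax hFP hiso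

/-! ### Finite loci consist of isolated closed points -/

/-- A finite locally closed subset of affine space consists of closed points, because the polynomial
ring is Jacobson. -/
lemma finite_locus_maximal {K : Type} [Field K] {n : ℕ} {ι : Type}
    (U : Set (PrimeSpectrum (MvPolynomial (Fin n) K))) (hU : IsOpen U)
    (F : ι → MvPolynomial (Fin n) K)
    (hfin : {p : PrimeSpectrum (MvPolynomial (Fin n) K) | p ∈ U ∧ ∀ i, F i ∈ p.asIdeal}.Finite)
    (Q : PrimeSpectrum (MvPolynomial (Fin n) K)) (hQU : Q ∈ U) (hQ : ∀ i, F i ∈ Q.asIdeal) :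
    Q.asIdeal.IsMaximal := by
  classical
  obtain ⟨_, ⟨a, rfl⟩, ha, hsub⟩ :=
    PrimeSpectrum.isTopologicalBasis_basic_opens.exists_subset_of_mem_open hQU hU
  rw [SetLike.mem_coe, PrimeSpectrum.mem_basicOpen] at ha
  have hsep : ∀ q : PrimeSpectrum (MvPolynomial (Fin n) K), ∃ y, y ∉ Q.asIdeal ∧
      (Q.asIdeal ≤ q.asIdeal → q ≠ Q → y ∈ q.asIdeal) := by
    intro q
    by_cases h : q.asIdeal ≤ Q.asIdeal
    · refine ⟨1, (Ideal.ne_top_iff_one _).1 Q.isPrime.ne_top, fun h1 h2 => absurd ?_ h2⟩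
      exact PrimeSpectrum.ext (le_antisymm h h1)
    · obtain ⟨y, h1, h2⟩ := Set.not_subset.1 h
      exact ⟨y, h2, fun _ _ => h1⟩
  -- The element `z` below lies outside `Q`; a point of the closure of `Q` at which `z` does not
  -- vanish lies in `U`, hence in the locus, and is different from every point of it but `Q`.
  choose y hy1 hy2 using hsep
  set z := a * ∏ q ∈ hfin.toFinset, y q with hz
  have hzQ : z ∉ Q.asIdeal := by
    intro h
    rcases Q.isPrime.mem_or_mem h with h | h
    · exact ha h
    · obtain ⟨q, _, h⟩ := (Ideal.IsPrime.prod_mem_iff (p := Q.asIdeal)).1 h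
      exact hy1 q h
  have hjac : Q.asIdeal.jacobson = Q.asIdeal :=
    IsJacobsonRing.out inferInstance Q.isPrime.isRadical
  rw [← hjac, Ideal.jacobson, Ideal.mem_sInf] at hzQ
  push Not at hzQ
  obtain ⟨M, ⟨hQM, hM⟩, hzM⟩ := hzQ
  let m : PrimeSpectrum (MvPolynomial (Fin n) K) := ⟨M, hM.isPrime⟩
  have hmW : m ∈ hfin.toFinset := by
    rw [Set.Finite.mem_toFinset]
    refine ⟨hsub ?_, fun i => hQM (hQ i)⟩
    rw [SetLike.mem_coe, PrimeSpectrum.mem_basicOpen]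
    exact fun h => hzM (Ideal.mul_mem_right _ _ h)
  have hmQ : m = Q := by
    by_contra hne
    exact hzM (Ideal.mul_mem_left _ _
      (Ideal.mem_of_dvd _ (Finset.dvd_prod_of_mem y hmW) (hy2 m hQM hne)))
  rw [← hmQ]
  exact hM

/-! ### Derivations of the polynomial ring -/

/-- A derivation raises degrees by at most a constant, namely the maximal degree of the `D x_i`. -/
lemma derivation_degree {K : Type} [Field K] {n : ℕ}
    (D : Derivation K (MvPolynomial (Fin n) K) (MvPolynomial (Fin n) K)) :
    ∃ B : ℕ, ∀ f, (D f).totalDegree ≤ f.totalDegree + B := by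
  let B := Finset.univ.sup fun i : Fin n => (D (X i)).totalDegree
  have hB : ∀ i, (D (X i)).totalDegree ≤ B := fun i =>
    Finset.le_sup (f := fun i : Fin n => (D (X i)).totalDegree) (Finset.mem_univ i)
  refine ⟨B, ?_⟩
  have hmon : ∀ (N : ℕ) (s : Fin n →₀ ℕ), s.degree = N →
      (D (monomial s (1 : K))).totalDegree ≤ N + B := by
    intro N
    induction N with
    | zero =>
      intro s hs
      rw [Finsupp.degree_eq_zero_iff] at hs
      subst hs
      have : (monomial (0 : Fin n →₀ ℕ) (1 : K)) = 1 := rfl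
      rw [this]; simp
    | succ N ih =>
      intro s hs
      have hne : s ≠ 0 := by rintro rfl; simp at hs
      obtain ⟨i, hi⟩ := Finsupp.ne_iff.1 hne
      have hle : Finsupp.single i 1 ≤ s := by
        simpa [Nat.one_le_iff_ne_zero] using hi
      obtain ⟨u, rfl⟩ := exists_add_of_le hle
      have hu : u.degree = N := by
        rw [map_add, Finsupp.degree_single] at hs; omega
      have h1 : (monomial (Finsupp.single i 1 + u) (1:K)) = X i * monomial u 1 := by
        rw [X, monomial_mul, one_mul]
      rw [h1, Derivation.leibniz]
      refine (totalDegree_add _ _).trans (max_le ?_ ?_)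
      · refine (totalDegree_mul _ _).trans ?_
        have := ih u hu
        have := totalDegree_X (R := K) i
        omega
      · refine (totalDegree_mul _ _).trans ?_
        have := hB i
        have h := totalDegree_monomial_le u (1:K)
        change _ ≤ u.degree at h
        omega
  intro f
  conv_lhs => rw [f.as_sum, map_sum]
  refine totalDegree_finsetSum_le fun s hs => ?_
  rw [← mul_one (coeff s f), ← smul_eq_mul, ← smul_monomial, D.map_smul]
  refine (totalDegree_smul_le _ _).trans ((hmon _ s rfl).trans ?_)
  exact Nat.add_le_add_right (le_totalDegree hs) _


lemma deriv_coe_sum {K A M ι : Type} [CommRing K] [CommRing A] [Algebra K A] [AddCommGroup M]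
    [Module K M] [Module A M] [Fintype ι] (E : ι → Derivation K A M) :
    ⇑(∑ k, E k) = ∑ k, ⇑(E k) :=
  map_sum (Derivation.coeFnAddMonoidHom (R := K) (A := A) (M := M)) E Finset.univ

/-- The chain rule `E f = ∑ ∂_k f · E(x_k)`. -/
lemma derivation_expand {K : Type} [Field K] {n : ℕ} {M : Type} [AddCommGroup M] [Module K M]
    [Module (MvPolynomial (Fin n) K) M] [IsScalarTower K (MvPolynomial (Fin n) K) M]
    (E : Derivation K (MvPolynomial (Fin n) K) M) (f : MvPolynomial (Fin n) K) :
    E f = ∑ k, pderiv k f • E (X k) := by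
  have : E = ∑ k, (LinearMap.toSpanSingleton (MvPolynomial (Fin n) K) M (E (X k))).compDer
      (pderiv k) := by
    refine derivation_ext fun i => ?_
    rw [deriv_coe_sum, Finset.sum_apply, Finset.sum_eq_single i]
    · simp
    · intro k _ hk
      simp [pderiv_X_of_ne hk.symm]
    · simp
  conv_lhs => rw [this]
  rw [deriv_coe_sum, Finset.sum_apply]
  simp

/-! ### Common zeros of étale coordinates -/

/-- If `L` is a localization of a quotient of `A` in which the `t_j` vanish and `s` is invertible,
then `L` is unramified over `K`. The chain rule gives `(∂_k t_j) (D_i x_k) = s · 1`, so the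
Jacobian matrix of `t` is invertible over `L`; and `d t_j = 0` in `Ω[L⁄K]` then forces `d x_k = 0`. -/
lemma etale_unramified {K : Type} [Field K] {n : ℕ} (t : Fin n → MvPolynomial (Fin n) K)
    (s : MvPolynomial (Fin n) K)
    (D : Fin n → Derivation K (MvPolynomial (Fin n) K) (MvPolynomial (Fin n) K))
    (hD : ∀ i j : Fin n, D i (t j) = if i = j then s else 0)
    {L : Type} [CommRing L] [Algebra K L] [Algebra (MvPolynomial (Fin n) K) L]
    [IsScalarTower K (MvPolynomial (Fin n) K) L]
    (hsL : IsUnit (algebraMap (MvPolynomial (Fin n) K) L s))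
    (htL : ∀ j, algebraMap (MvPolynomial (Fin n) K) L (t j) = 0)
    (hsurj : ∀ b : L, ∃ (k : ℕ) (f : MvPolynomial (Fin n) K),
      b * algebraMap _ L (s ^ k) = algebraMap _ L f) :
    Algebra.FormallyUnramified K L := by
  let E := (KaehlerDifferential.D K L).compAlgebraMap (MvPolynomial (Fin n) K)
  have hE : ∀ f, E f = KaehlerDifferential.D K L (algebraMap _ L f) := fun f => rfl
  have hinv : ∀ (k : ℕ) (v : Ω[L⁄K]), s ^ k • v = 0 → v = 0 := by
    intro k v hv
    rw [← algebraMap_smul L, map_pow] at hv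
    exact (hsL.pow k).smul_eq_zero.1 hv
  have ht : ∀ j, E (t j) = 0 := by
    intro j
    rw [hE, htL, map_zero]
  let J : Matrix (Fin n) (Fin n) (MvPolynomial (Fin n) K) := fun j k => pderiv k (t j)
  let Mx : Matrix (Fin n) (Fin n) (MvPolynomial (Fin n) K) := fun k i => D i (X k)
  have hJM : J * Mx = s • 1 := by
    ext1 j i
    rw [Matrix.mul_apply]
    have := (derivation_expand (D i) (t j)).symm.trans (hD i j)
    simp only [smul_eq_mul] at this
    rw [this, Matrix.smul_apply, Matrix.one_apply]
    simp [eq_comm]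
  have hdet : Mx.det * J.det = s ^ n := by
    rw [mul_comm, ← Matrix.det_mul, hJM]; simp
  have hX : ∀ l, E (X l) = 0 := by
    intro l
    apply hinv n
    rw [← hdet, mul_smul]
    suffices h : J.det • E (X l) = 0 by rw [h, smul_zero]
    -- Cramer's rule applied to the relations `∑ ∂_k t_j · d x_k = d t_j = 0`.
    have h1 : ∑ k, (J.adjugate * J) l k • E (X k) = J.det • E (X l) := by
      rw [Matrix.adjugate_mul, Finset.sum_eq_single l]
      · simp
      · intro k _ hk; simp [Matrix.one_apply_ne hk.symm]
      · simp
    rw [← h1]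
    simp only [Matrix.mul_apply, Finset.sum_smul, mul_smul]
    rw [Finset.sum_comm]
    refine Finset.sum_eq_zero fun j _ => ?_
    rw [← Finset.smul_sum]
    have := (derivation_expand E (t j)).symm.trans (ht j)
    rw [show ∑ k, J j k • E (X k) = 0 from this, smul_zero]
  have hE0 : ∀ f, E f = 0 := by
    intro f
    rw [derivation_expand]
    simp [hX]
  have hD0 : ∀ b : L, KaehlerDifferential.D K L b = 0 := by
    intro b
    obtain ⟨k, f, hx'⟩ := hsurj b
    have h1 := hE0 f
    rw [hE, ← hx', Derivation.leibniz, ← hE, hE0, smul_zero, zero_add, algebraMap_smul] at h1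
    exact hinv k _ h1
  constructor
  rw [← Submodule.subsingleton_iff L, ← subsingleton_iff_bot_eq_top,
    ← KaehlerDifferential.span_range_derivation, eq_comm, Submodule.span_eq_bot]
  rintro _ ⟨b, rfl⟩
  exact hD0 b

/-- The closed points at which all `t_j` vanish but `s` does not have bounded degree: their residue
fields are quotients of `(A / (t_1, …, t_n))[1/s]`, which is unramified and hence finite over `K`. -/
lemma etale_degree {K : Type} [Field K] {n : ℕ} (t : Fin n → MvPolynomial (Fin n) K)
    (s : MvPolynomial (Fin n) K)
    (D : Fin n → Derivation K (MvPolynomial (Fin n) K) (MvPolynomial (Fin n) K))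
    (hD : ∀ i j : Fin n, D i (t j) = if i = j then s else 0) :
    ∃ N : ℕ, ∀ p : Ideal (MvPolynomial (Fin n) K), p.IsMaximal → (∀ j, t j ∈ p) → s ∉ p →
      Module.finrank K (MvPolynomial (Fin n) K ⧸ p) ≤ N := by
  let I := Ideal.span (Set.range t)
  let B := MvPolynomial (Fin n) K ⧸ I
  let s' : B := Ideal.Quotient.mk I s
  let L := Localization.Away s'
  have hsL : IsUnit (algebraMap (MvPolynomial (Fin n) K) L s) := by
    rw [IsScalarTower.algebraMap_apply (MvPolynomial (Fin n) K) B L]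
    exact IsLocalization.Away.algebraMap_isUnit s'
  have htL : ∀ j, algebraMap (MvPolynomial (Fin n) K) L (t j) = 0 := by
    intro j
    rw [IsScalarTower.algebraMap_apply (MvPolynomial (Fin n) K) B L]
    have : algebraMap (MvPolynomial (Fin n) K) B (t j) = 0 :=
      Ideal.Quotient.eq_zero_iff_mem.2 (Ideal.subset_span ⟨j, rfl⟩)
    rw [this, map_zero]
  have hunr : Algebra.FormallyUnramified K L := by
    refine etale_unramified t s D hD hsL htL fun b => ?_
    obtain ⟨⟨x, ⟨_, k, rfl⟩⟩, hx⟩ := IsLocalization.surj (Submonoid.powers s') b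
    obtain ⟨f, rfl⟩ := Ideal.Quotient.mk_surjective x
    exact ⟨k, f, hx⟩
  have hfin : Module.Finite K L := Algebra.FormallyUnramified.finite_of_free K L
  refine ⟨Module.finrank K L, fun p hp htp hsp => ?_⟩
  have hIp : I ≤ p := by
    rw [Ideal.span_le]
    rintro _ ⟨j, rfl⟩
    exact htp j
  let g : B →ₐ[K] MvPolynomial (Fin n) K ⧸ p := Ideal.Quotient.factorₐ K hIp
  have hg : ∀ y : Submonoid.powers s', IsUnit (g y) := by
    let _ := Ideal.Quotient.field p
    rintro ⟨_, k, rfl⟩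
    have : g s' ≠ 0 := fun h => hsp (Ideal.Quotient.eq_zero_iff_mem.1 h)
    simpa using (isUnit_iff_ne_zero.2 this).pow k
  let gL : L →ₐ[K] MvPolynomial (Fin n) K ⧸ p :=
    IsLocalization.liftAlgHom (M := Submonoid.powers s') (f := g) hg
  refine LinearMap.finrank_le_finrank_of_surjective (f := gL.toLinearMap) ?_
  intro y
  obtain ⟨f, rfl⟩ := Ideal.Quotient.mk_surjective y
  refine ⟨algebraMap B L (Ideal.Quotient.mk I f), ?_⟩
  exact IsLocalization.lift_eq _ _

/-- If the locus `F_1 = ⋯ = F_n = 0` inside an open set `U` is finite, its points are isolated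
(open sets are stable under generalization), so the Bézout inequality applies. -/
lemma locus_card {K : Type} [Field K] {n : ℕ}
    (U : Set (PrimeSpectrum (MvPolynomial (Fin n) K))) (hU : IsOpen U)
    (F : Fin n → MvPolynomial (Fin n) K) (e : Fin n → ℕ) (hF : ∀ i, (F i).totalDegree ≤ e i)
    (hfin : {p : PrimeSpectrum (MvPolynomial (Fin n) K) | p ∈ U ∧ ∀ i, F i ∈ p.asIdeal}.Finite) :
    {p : PrimeSpectrum (MvPolynomial (Fin n) K) | p ∈ U ∧ ∀ i, F i ∈ p.asIdeal}.ncard ≤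
      ∏ i, (e i + 1) := by
  have : Finite {p : PrimeSpectrum (MvPolynomial (Fin n) K) |
    p ∈ U ∧ ∀ i, F i ∈ p.asIdeal} := hfin
  rw [← Nat.card_coe_set_eq]
  set W := {p : PrimeSpectrum (MvPolynomial (Fin n) K) | p ∈ U ∧ ∀ i, F i ∈ p.asIdeal} with hW
  let ι := (Finite.equivFin W).symm
  refine bezout F e hF _ (fun j => (ι j).1.asIdeal) ?_ ?_ ?_ ?_
  · intro i j hij
    exact ι.injective (Subtype.ext (PrimeSpectrum.ext hij))
  · intro j
    exact finite_locus_maximal U hU F hfin _ (ι j).2.1 (ι j).2.2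
  · intro j i
    exact (ι j).2.2 i
  · intro j Q hQ hle hFQ
    let Q' : PrimeSpectrum (MvPolynomial (Fin n) K) := ⟨Q, hQ⟩
    have hQU : Q' ∈ U :=
      hU.stableUnderGeneralization ((PrimeSpectrum.le_iff_specializes Q' (ι j).1).1 hle) (ι j).2.1
    have hQmax : Q.IsMaximal := finite_locus_maximal U hU F hfin Q' hQU hFQ
    exact hQmax.eq_of_le (ι j).1.isPrime.ne_top hle

/-! ### The size of `W_m` -/

/-- `I'_d` is a finite set, so the `Nat.card`s counting it are genuine cardinalities. -/
lemma bounded_degree_finite {K : Type} [Field K] [Fintype K] {n : ℕ} (J : Ideal (Aff K n))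
    (d : ℕ) : (Idd' K n J d).Finite := by
  have : Finite (restrictTotalDegree (Fin n) K d) := Module.finite_of_finite K
  refine Set.Finite.subset (s := (restrictTotalDegree (Fin n) K d : Set (Aff K n)))
    (Set.toFinite _) ?_
  intro f hf
  exact (mem_restrictTotalDegree _ _ _).2 hf.1

lemma fpoly_degree {K : Type} [Field K] {n : ℕ} (pp m : ℕ) (hp : pp ≠ 0)
    (t : Fin n → Aff K n) (f0 : Aff K n) (d : ℕ) (hf0 : f0.totalDegree ≤ d)
    (g : Fin n → Aff K n) (hg : ∀ j, (g j).totalDegree ≤ (d - tauDeg K n t) / pp) :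
    (fpoly K pp m t f0 g 0).totalDegree ≤ d + tauDeg K n t := by
  unfold fpoly
  rw [zero_pow hp, add_zero]
  refine (totalDegree_add _ _).trans (max_le (by omega) ?_)
  refine totalDegree_finsetSum_le fun j _ => ?_
  split_ifs
  · refine (totalDegree_mul _ _).trans ?_
    have h1 : (t j).totalDegree ≤ tauDeg K n t :=
      Finset.le_sup (f := fun j => (t j).totalDegree) (Finset.mem_univ j)
    have h2 := (totalDegree_pow (g j) pp).trans (Nat.mul_le_mul_left pp (hg j))
    have h3 := Nat.mul_div_le (d - tauDeg K n t) pp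
    omega
  · simp

/-- `#W_m = O(d^m)`, with a constant depending only on the degrees of the `t_j` and the `D_i x_k`
and on `n`. -/
lemma Wset_card {K : Type} [Field K] {n : ℕ} (pp m : ℕ) (hp : pp ≠ 0) (hmn : m ≤ n)
    (t : Fin n → Aff K n) (U : Set (PrimeSpectrum (Aff K n))) (hU : IsOpen U)
    (D : Fin n → Derivation K (Aff K n) (Aff K n)) :
    ∃ C : ℝ, 0 < C ∧ ∀ d : ℕ, 1 ≤ d → ∀ f0 : Aff K n, f0.totalDegree ≤ d →
      ∀ g : Fin n → Aff K n,
        (∀ j : Fin n, (g j).totalDegree ≤ (d - tauDeg K n t) / pp) →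
        (Wset K pp m t U D f0 g m).Finite →
        (Nat.card ↥(Wset K pp m t U D f0 g m) : ℝ) ≤ C * (d : ℝ) ^ m := by
  choose b hb using fun j => derivation_degree (D j)
  let B := Finset.univ.sup b
  have hB : ∀ j, b j ≤ B := fun j => Finset.le_sup (Finset.mem_univ j)
  set τ := tauDeg K n t with hτ
  have htτ : ∀ j, (t j).totalDegree ≤ τ := fun j =>
    Finset.le_sup (f := fun j => (t j).totalDegree) (Finset.mem_univ j)
  refine ⟨((τ + B + 2 : ℕ) : ℝ) ^ n, by positivity, ?_⟩
  intro d hd f0 hf0 g hg hfin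
  let F : Fin n → Aff K n := fun j => if (j : ℕ) < m then D j (fpoly K pp m t f0 g 0) else t j
  let e : Fin n → ℕ := fun j => if (j : ℕ) < m then d + τ + B else τ
  have hF : ∀ j, (F j).totalDegree ≤ e j := by
    intro j
    simp only [F, e]
    split_ifs
    · have h1 := hb j (fpoly K pp m t f0 g 0)
      have h2 := fpoly_degree pp m hp t f0 d hf0 g hg
      have h3 := hB j
      omega
    · exact htτ j
  have hW : Wset K pp m t U D f0 g m = {p | p ∈ U ∧ ∀ i, F i ∈ p.asIdeal} := by
    ext p
    simp only [Wset, Xpts, paramIdeal, Set.mem_ofPred_eq, Ideal.span_le, F]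
    constructor
    · rintro ⟨⟨h1, h2⟩, h3⟩
      refine ⟨h1, fun i => ?_⟩
      split_ifs with hi
      · exact h3 i hi
      · exact h2 ⟨i, not_lt.1 hi, rfl⟩
    · rintro ⟨h1, h2⟩
      refine ⟨⟨h1, ?_⟩, fun j hj => ?_⟩
      · rintro _ ⟨i, hi, rfl⟩
        have := h2 i
        rwa [if_neg (not_lt.2 hi)] at this
      · have := h2 j
        rwa [if_pos hj] at this
  have hcard : Nat.card ↥(Wset K pp m t U D f0 g m) ≤ ∏ i, (e i + 1) := by
    rw [Nat.card_coe_set_eq, hW]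
    exact locus_card U hU F e hF (hW ▸ hfin)
  have hprod : ∏ i, (e i + 1) ≤ (τ + B + 2) ^ n * d ^ m := by
    calc ∏ i, (e i + 1) ≤ ∏ i : Fin n, ((τ + B + 2) * (if (i : ℕ) < m then d else 1)) := by
          refine Finset.prod_le_prod' fun i _ => ?_
          simp only [e]
          split_ifs
          · nlinarith
          · omega
      _ = (τ + B + 2) ^ n * d ^ m := by
          rw [Finset.prod_mul_distrib, Finset.prod_ite]
          have : (Finset.univ.filter fun i : Fin n => (i : ℕ) < m).card = m := by
            rw [Fin.card_filter_val_lt, min_eq_right hmn]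
          simp [this]
  exact_mod_cast hcard.trans hprod

/-! ### Counting the polynomials `h` -/

/-- Subtracting a fixed solution `h_1` maps the `h` with `f ∈ p` injectively to elements of `p`,
because `(h - h_1)^p = h^p - h_1^p`. -/
lemma fpoly_fiber_card {K : Type} [Field K] [Fintype K] {n : ℕ} (pp m : ℕ) [Fact pp.Prime]
    [CharP K pp] (t : Fin n → Aff K n) (f0 : Aff K n) (g : Fin n → Aff K n) (J : Ideal (Aff K n))
    (η : ℕ) (p : Ideal (Aff K n)) (hp : p.IsPrime) :
    {h | h ∈ Idd' K n J η ∧ fpoly K pp m t f0 g h ∈ p}.ncard ≤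
      {h | h ∈ Idd' K n J η ∧ h ∈ p}.ncard := by
  rcases Set.eq_empty_or_nonempty {h | h ∈ Idd' K n J η ∧ fpoly K pp m t f0 g h ∈ p} with h0 | h0
  · rw [h0]; simp
  obtain ⟨h1, hh1, hp1⟩ := h0
  refine Set.ncard_le_ncard_of_injOn (fun h => h - h1) ?_ ?_
    ((bounded_degree_finite J η).subset fun h hh => hh.1)
  · rintro h ⟨hh, hph⟩
    refine ⟨⟨?_, J.sub_mem hh.2 hh1.2⟩, ?_⟩
    · exact (totalDegree_sub _ _).trans (max_le hh.1 hh1.1)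
    · have : (h - h1) ^ pp ∈ p := by
        rw [sub_pow_char]
        have := p.sub_mem hph hp1
        simpa [fpoly] using this
      exact hp.mem_of_pow_mem _ this
  · intro a _ b _ hab
    exact sub_left_injective hab

/-- Exponential decay in `⌊d / M⌋` beats polynomial growth in `d`. -/
lemma decay (m M c q : ℕ) (hM : 0 < M) (hq : 2 ≤ q) (C ε : ℝ) (hC : 0 < C) (hε : 0 < ε) :
    ∃ d0 : ℕ, ∀ d : ℕ, d0 ≤ d →
      C * (d : ℝ) ^ m * (q : ℝ) ^ (-(((d / M : ℕ) : ℤ) - (c : ℤ))) ≤ ε := by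
  have hq1 : (1 : ℝ) < q := by exact_mod_cast hq
  have hq0 : (0 : ℝ) < q := by linarith
  have h1 : Tendsto (fun u : ℕ => (u : ℝ) ^ m * ((q : ℝ)⁻¹) ^ u) atTop (𝓝 0) := by
    apply tendsto_pow_const_mul_const_pow_of_abs_lt_one
    rw [abs_of_pos (by positivity)]
    exact inv_lt_one_of_one_lt₀ hq1
  have h2 := ((tendsto_add_atTop_iff_nat 1).2 h1).const_mul (C * (M : ℝ) ^ m * (q : ℝ) ^ (c + 1))
  rw [mul_zero] at h2
  have h3 := (h2.comp (Nat.tendsto_div_const_atTop hM.ne')).eventually (ge_mem_nhds hε)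
  obtain ⟨d0, hd0⟩ := eventually_atTop.1 h3
  refine ⟨d0, fun d hd => le_trans ?_ (hd0 d hd)⟩
  have hdM : (d : ℝ) ≤ M * ((d / M + 1 : ℕ) : ℝ) := by
    exact_mod_cast (Nat.lt_mul_div_succ d hM).le
  have hz : (q : ℝ) ^ (-(((d / M : ℕ) : ℤ) - (c : ℤ))) =
      (q : ℝ) ^ (c + 1) * ((q : ℝ)⁻¹) ^ (d / M + 1) := by
    rw [inv_pow, ← zpow_natCast, ← zpow_natCast, ← zpow_neg, ← zpow_add₀ hq0.ne']
    congr 1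
    push_cast
    ring
  rw [hz]
  simp only [Function.comp]
  calc C * (d : ℝ) ^ m * ((q : ℝ) ^ (c + 1) * ((q : ℝ)⁻¹) ^ (d / M + 1))
      ≤ C * (M * ((d / M + 1 : ℕ) : ℝ)) ^ m *
          ((q : ℝ) ^ (c + 1) * ((q : ℝ)⁻¹) ^ (d / M + 1)) := by gcongr
    _ = _ := by rw [mul_pow]; ring

/-- **Claim 2** in the proof of Lemma 4.2 (Singularities of high degree off `V`),
together with the Bézout bound `#W_m = O(d^m)`.  With notation as in that proof —
`X ⊆ 𝔸^n` smooth of dimension `m` cut out in `N_x` by the local parameters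
`t_{m+1} = ⋯ = t_n = 0`, all `t_i` vanishing on `Z`, `D_i = s·∂_i` the global
derivations dual to the `dt_i` with `s` invertible on `X`,
`f := f_0 + g_1^p t_1 + ⋯ + g_m^p t_m + h^p` with `f_0 ∈ I'_d`, `g_i ∈ S'_γ`,
`h ∈ I'_η` uniform and independent, `W_m := X ∩ {D_1 f = ⋯ = D_m f = 0}`, and `c` a
constant such that (Lemma 4.1, transported to the chart) for every closed point
`P ∉ Z` and `d' ≥ c` the fraction of `f ∈ I'_{d'}` vanishing at `P` is at most
`q^{-min(d'-c, deg P)}` — we have: `#W_m = O(d^m)`, and conditioned on a choice of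
`f_0, g_1, …, g_m` for which `W_m` is finite, the probability (over the uniform
choice of `h ∈ I'_η`) that `H_f ∩ W_m` contains no closed point of degree
`> (d-c)/(m+1)` is `1 - o(1)` as `d → ∞`. -/
theorem no_high_degree_point_probability_claim2
    (pp : ℕ) [Fact pp.Prime] (hchar : CharP K pp)
    (m : ℕ) (hmn : m ≤ n)
    (t : Fin n → Aff K n) (s : Aff K n)
    (U : Set (PrimeSpectrum (Aff K n))) (hU : IsOpen U)
    (JZ' : Ideal (Aff K n)) (htZ : ∀ j : Fin n, t j ∈ JZ')
    (hsX : ∀ p ∈ Xpts K m t U, s ∉ p.asIdeal)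
    (hXsm : ∀ p ∈ Xpts K m t U, p.asIdeal.IsMaximal →
      IsRegularLocalOfDim (affLocalRing K n (paramIdeal K m t) p) m)
    (D : Fin n → Derivation K (Aff K n) (Aff K n))
    (hD : ∀ i j : Fin n, D i (t j) = if i = j then s else 0)
    (c : ℕ)
    (hcI : ∀ p : PrimeSpectrum (Aff K n), p.asIdeal.IsMaximal → ¬ JZ' ≤ p.asIdeal →
      ∀ d' : ℕ, c ≤ d' →
        (Nat.card {f : Aff K n // f ∈ Idd' K n JZ' d' ∧ f ∈ p.asIdeal} : ℝ) /
            (Nat.card {f : Aff K n // f ∈ Idd' K n JZ' d'} : ℝ) ≤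
          (Fintype.card K : ℝ) ^ (-(min ((d' : ℤ) - (c : ℤ)) (degPtAff K n p : ℤ)))) :
    (∃ C : ℝ, 0 < C ∧ ∀ d : ℕ, 1 ≤ d → ∀ f0 ∈ Idd' K n JZ' d,
      ∀ g : Fin n → Aff K n,
        (∀ j : Fin n, (g j).totalDegree ≤ (d - tauDeg K n t) / pp) →
        (Wset K pp m t U D f0 g m).Finite →
        (Nat.card ↥(Wset K pp m t U D f0 g m) : ℝ) ≤ C * (d : ℝ) ^ m)
    ∧ ∀ ε : ℝ, 0 < ε → ∃ d0 : ℕ, ∀ d : ℕ, d0 ≤ d →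
      ∀ f0 ∈ Idd' K n JZ' d,
      ∀ g : Fin n → Aff K n,
        (∀ j : Fin n, (g j).totalDegree ≤ (d - tauDeg K n t) / pp) →
        (Wset K pp m t U D f0 g m).Finite →
        1 - ε ≤
          (Nat.card {h : Aff K n // h ∈ Idd' K n JZ' (d / pp) ∧
            ∀ p : PrimeSpectrum (Aff K n), p.asIdeal.IsMaximal →
              p ∈ Wset K pp m t U D f0 g m →
              (d : ℤ) - (c : ℤ) < ((m : ℤ) + 1) * (degPtAff K n p : ℤ) →
              fpoly K pp m t f0 g h ∉ p.asIdeal} : ℝ) /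
          (Nat.card {h : Aff K n // h ∈ Idd' K n JZ' (d / pp)} : ℝ) := by
  have hp : pp ≠ 0 := (Fact.out : pp.Prime).ne_zero
  obtain ⟨C, hC, hW⟩ := Wset_card pp m hp hmn t U hU D
  refine ⟨⟨C, hC, fun d hd f0 hf0 => hW d hd f0 hf0.1⟩, ?_⟩
  intro ε hε
  obtain ⟨N, hN⟩ := etale_degree t s D hD
  set M := (m + 1) * pp with hM
  have hMpos : 0 < M := by positivity
  obtain ⟨d1, hd1⟩ := decay m M c (Fintype.card K) hMpos Fintype.one_lt_card C ε hC hε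
  -- The second bound ensures `d ≥ 1`, `⌊d / p⌋ ≥ c`, and that a point of degree at most `N` does
  -- not satisfy `deg P > (d - c) / (m + 1)`.
  refine ⟨max d1 (c + (m + 1) * N + 1 + pp * c), ?_⟩
  intro d hd f0 hf0 g hg hfin
  have hdd1 : d1 ≤ d := (le_max_left _ _).trans hd
  have hdN : c + (m + 1) * N + 1 + pp * c ≤ d := (le_max_right _ _).trans hd
  set W := Wset K pp m t U D f0 g m with hWdef
  set η := d / pp with hη
  have hcη : c ≤ η := (Nat.le_div_iff_mul_le (Nat.pos_of_ne_zero hp)).2 (by nlinarith)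
  set H := Idd' K n JZ' η with hH
  have hHfin : H.Finite := bounded_degree_finite JZ' η
  have hHpos : (0 : ℝ) < H.ncard := by
    have : H.Nonempty := ⟨0, by simp, JZ'.zero_mem⟩
    exact_mod_cast (Set.ncard_pos hHfin).2 this
  -- `⌊d / M⌋ - c`, with `M = (m + 1) p`, is a common lower bound for `⌊d / p⌋ - c` and for the
  -- degree of every point under consideration.
  set δ : ℝ := (Fintype.card K : ℝ) ^ (-(((d / M : ℕ) : ℤ) - (c : ℤ))) with hδ
  have hδ0 : 0 ≤ δ := by positivity
  have hcount : ∀ p ∈ W, p.asIdeal.IsMaximal →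
      (d : ℤ) - (c : ℤ) < ((m : ℤ) + 1) * (degPtAff K n p : ℤ) →
      ({h | h ∈ H ∧ fpoly K pp m t f0 g h ∈ p.asIdeal}.ncard : ℝ) ≤ δ * H.ncard := by
    intro p hpW hmax hdeg
    have hZ : ¬ JZ' ≤ p.asIdeal := by
      intro hZ
      have h1 : degPtAff K n p ≤ N :=
        hN p.asIdeal hmax (fun j => hZ (htZ j)) (hsX p hpW.1)
      have h2 : (m + 1) * degPtAff K n p ≤ (m + 1) * N := Nat.mul_le_mul_left _ h1
      have h3 : (d : ℤ) - c < (((m + 1) * degPtAff K n p : ℕ) : ℤ) := by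
        push_cast; exact hdeg
      omega
    have h1 := hcI p hmax hZ η hcη
    rw [show Nat.card {f : Aff K n // f ∈ Idd' K n JZ' η} = H.ncard from rfl,
      show Nat.card {f : Aff K n // f ∈ Idd' K n JZ' η ∧ f ∈ p.asIdeal} =
        {h | h ∈ H ∧ h ∈ p.asIdeal}.ncard from rfl, div_le_iff₀ hHpos] at h1
    have h2 : (({h | h ∈ H ∧ fpoly K pp m t f0 g h ∈ p.asIdeal}.ncard : ℕ) : ℝ) ≤
        ({h | h ∈ H ∧ h ∈ p.asIdeal}.ncard : ℕ) := by
      exact_mod_cast fpoly_fiber_card pp m t f0 g JZ' η p.asIdeal p.isPrime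
    refine h2.trans (h1.trans ?_)
    refine mul_le_mul_of_nonneg_right ?_ hHpos.le
    refine zpow_le_zpow_right₀ (by exact_mod_cast Fintype.one_lt_card.le) (neg_le_neg (le_min ?_ ?_))
    · have : d / M ≤ η := Nat.div_le_div_left (Nat.le_mul_of_pos_left pp (by omega))
        (Nat.pos_of_ne_zero hp)
      omega
    · have h3 : d < (m + 1) * (degPtAff K n p + c) := by
        have : (d : ℤ) < ((m : ℤ) + 1) * (degPtAff K n p + c) := by nlinarith
        exact_mod_cast this
      have h4 : d / M ≤ degPtAff K n p + c :=
        (Nat.div_le_div_left (Nat.le_mul_of_pos_right (m + 1) (Nat.pos_of_ne_zero hp))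
          (by omega)).trans (Nat.div_lt_of_lt_mul h3).le
      omega
  set Gd := {h : Aff K n | h ∈ H ∧
            ∀ p : PrimeSpectrum (Aff K n), p.asIdeal.IsMaximal →
              p ∈ W →
              (d : ℤ) - (c : ℤ) < ((m : ℤ) + 1) * (degPtAff K n p : ℤ) →
              fpoly K pp m t f0 g h ∉ p.asIdeal} with hGd
  change 1 - ε ≤ (Gd.ncard : ℝ) / (H.ncard : ℝ)
  rw [le_div_iff₀ hHpos]
  classical
  let bad : PrimeSpectrum (Aff K n) → Set (Aff K n) := fun p =>
    if p.asIdeal.IsMaximal ∧ (d : ℤ) - (c : ℤ) < ((m : ℤ) + 1) * (degPtAff K n p : ℤ) then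
      {h | h ∈ H ∧ fpoly K pp m t f0 g h ∈ p.asIdeal} else ∅
  have hcover : H ⊆ Gd ∪ ⋃ p ∈ hfin.toFinset, bad p := by
    intro h hh
    by_cases hG : h ∈ Gd
    · exact Or.inl hG
    · right
      simp only [hGd, Set.mem_ofPred_eq, not_and, not_forall, not_not] at hG
      obtain ⟨p, hpm, hpW, hdeg, hmem⟩ := hG hh
      refine Set.mem_biUnion (hfin.mem_toFinset.2 hpW) ?_
      simp only [bad]
      rw [if_pos ⟨hpm, hdeg⟩]
      exact ⟨hh, hmem⟩
  have hbadH : ∀ p, bad p ⊆ H := by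
    intro p
    simp only [bad]
    split_ifs
    · exact fun h hh => hh.1
    · exact Set.empty_subset _
  have hbad : ∀ p ∈ hfin.toFinset, ((bad p).ncard : ℝ) ≤ δ * H.ncard := by
    intro p hpW
    simp only [bad]
    split_ifs with hc
    · exact hcount p (hfin.mem_toFinset.1 hpW) hc.1 hc.2
    · simp only [Set.ncard_empty, Nat.cast_zero]
      positivity
  have hle : H.ncard ≤ Gd.ncard + ∑ p ∈ hfin.toFinset, (bad p).ncard := by
    have hUfin : (⋃ p ∈ hfin.toFinset, bad p).Finite :=
      hHfin.subset (Set.iUnion₂_subset fun p _ => hbadH p)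
    refine (Set.ncard_le_ncard hcover ((hHfin.subset fun h hh => hh.1).union hUfin)).trans
      ((Set.ncard_union_le _ _).trans (Nat.add_le_add_left ?_ _))
    exact Finset.set_ncard_biUnion_le _ _
  have hle' : (H.ncard : ℝ) ≤ Gd.ncard + ∑ p ∈ hfin.toFinset, ((bad p).ncard : ℝ) := by
    exact_mod_cast hle
  have hsum : ∑ p ∈ hfin.toFinset, ((bad p).ncard : ℝ) ≤ ε * H.ncard := by
    calc ∑ p ∈ hfin.toFinset, ((bad p).ncard : ℝ)
        ≤ hfin.toFinset.card • (δ * H.ncard) := Finset.sum_le_card_nsmul _ _ _ hbad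
      _ = (Nat.card W : ℝ) * δ * H.ncard := by
          rw [nsmul_eq_mul, Nat.card_coe_set_eq, Set.ncard_eq_toFinset_card W hfin, mul_assoc]
      _ ≤ (C * (d : ℝ) ^ m) * δ * H.ncard := by
          have := hW d (by omega) f0 hf0.1 g hg hfin
          gcongr
      _ ≤ ε * H.ncard := by
          have := hd1 d hdd1
          gcongr
  linarith

end ProjBertiniAff
end
end
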